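/- arXiv:2302.04159 — 3 statements merged into one kernel-verified Lean document; each statement's English description precedes it below -/
import Mathlib

section
/- For a simple closed polygon P in the Euclidean plane with interior angles ∠V₁, …, ∠Vₙ (traversed counterclockwise), the polygon density den(P) = (1/2π)·Σᵢ(π − ∠Vᵢ) equals 1. -/
open Real

/-- additivity of arguments inside an open half plane -/
lemma arg_half (a b w : ℂ) (ha : 0 < (a * w).re) (hb : 0 < (b * w).re) :
    Complex.arg (b / a) = Complex.arg (b * w) - Complex.arg (a * w) := by
  have ha0 : a * w ≠ 0 := by intro h; rw [h] at ha; simp at ha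
  have hb0 : b * w ≠ 0 := by intro h; rw [h] at hb; simp at hb
  have hw : w ≠ 0 := right_ne_zero_of_mul ha0
  have e : b / a = (b * w) / (a * w) := by
    rw [mul_div_mul_right _ _ hw]
  have h1 := abs_lt.1 (Complex.abs_arg_lt_pi_div_two_iff.2 (Or.inl ha))
  have h2 := abs_lt.1 (Complex.abs_arg_lt_pi_div_two_iff.2 (Or.inl hb))
  have h3 : ((Complex.arg (b / a) : ℝ) : Real.Angle) = ((Complex.arg (b * w) - Complex.arg (a * w) : ℝ) : Real.Angle) := by
    rw [e, Complex.arg_div_coe_angle hb0 ha0]; rfl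
  have h4 := congrArg Real.Angle.toReal h3
  rw [Complex.arg_coe_angle_toReal_eq_arg] at h4
  rw [h4, Real.Angle.toReal_coe_eq_self_iff]
  constructor <;> linarith [h1.1, h1.2, h2.1, h2.2]

lemma arg_square (a b c d w : ℂ) (ha : 0 < (a * w).re) (hb : 0 < (b * w).re)
    (hc : 0 < (c * w).re) (hd : 0 < (d * w).re) :
    Complex.arg (b / a) + Complex.arg (c / b) = Complex.arg (d / a) + Complex.arg (c / d) := by
  rw [arg_half a b w ha hb, arg_half b c w hb hc, arg_half a d w ha hd, arg_half d c w hd hc]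
  ring

lemma exists_sep (A B C D : ℂ) (h : Disjoint (segment ℝ A B) (segment ℝ C D)) :
    ∃ w : ℂ, 0 < ((C - A) * w).re ∧ 0 < ((D - A) * w).re ∧ 0 < ((D - B) * w).re ∧
      0 < ((C - B) * w).re := by
  have hc : ∀ P Q : ℂ, IsCompact (segment ℝ P Q) := by
    intro P Q
    rw [segment_eq_image_lineMap]
    exact isCompact_Icc.image (by fun_prop)
  obtain ⟨f, u, v, h1, h2, h3⟩ := geometric_hahn_banach_compact_closed (convex_segment A B) (hc A B)
    (convex_segment C D) (hc C D).isClosed h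
  have hf : ∀ z : ℂ, (z * (((f 1 : ℝ) : ℂ) - ((f Complex.I : ℝ) : ℂ) * Complex.I)).re = f z := by
    intro z
    have : z = z.re • (1:ℂ) + z.im • Complex.I := by
      simp [Complex.re_add_im]
    conv_rhs => rw [this]
    rw [map_add, map_smul, map_smul]
    simp
  refine ⟨((f 1 : ℝ) : ℂ) - ((f Complex.I : ℝ) : ℂ) * Complex.I, ?_⟩
  have a1 := h1 A (left_mem_segment ℝ A B)
  have a2 := h1 B (right_mem_segment ℝ A B)
  have a3 := h3 C (left_mem_segment ℝ C D)
  have a4 := h3 D (right_mem_segment ℝ C D)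
  simp only [hf, map_sub]
  refine ⟨?_, ?_, ?_, ?_⟩ <;> linarith

lemma square_seg (A B C D : ℂ) (h : Disjoint (segment ℝ A B) (segment ℝ C D)) :
    Complex.arg ((D - A) / (C - A)) + Complex.arg ((D - B) / (D - A)) =
    Complex.arg ((C - B) / (C - A)) + Complex.arg ((D - B) / (C - B)) := by
  obtain ⟨w, h1, h2, h3, h4⟩ := exists_sep A B C D h
  exact arg_square _ _ _ _ w h1 h2 h3 h4

lemma arg_triangle (a b : ℂ) (ha : a ≠ 0) (hb : b ≠ 0) (h : Complex.arg (b / a) ≠ π) :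
    Complex.arg ((a + b) / a) + Complex.arg (b / (a + b)) = Complex.arg (b / a) := by
  obtain ⟨w, h1, h2⟩ : ∃ w : ℂ, 0 < (a * w).re ∧ 0 < (b * w).re := by
    set θ := Complex.arg (b / a) with hθ
    have hθ1 : -π < θ := Complex.neg_pi_lt_arg _
    have hθ2 : θ < π := lt_of_le_of_ne (Complex.arg_le_pi _) h
    have hcos : 0 < Real.cos (θ / 2) := Real.cos_pos_of_mem_Ioo ⟨by linarith, by linarith⟩
    refine ⟨Complex.exp (((-(θ / 2) : ℝ) : ℂ) * Complex.I) / a, ?_, ?_⟩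
    · rw [mul_div_cancel₀ _ ha, Complex.exp_ofReal_mul_I_re, Real.cos_neg]
      exact hcos
    · have : b * (Complex.exp (((-(θ / 2) : ℝ) : ℂ) * Complex.I) / a)
          = (‖b / a‖ : ℂ) * Complex.exp (((θ / 2 : ℝ) : ℂ) * Complex.I) := by
        have e := Complex.norm_mul_exp_arg_mul_I (b / a)
        rw [← hθ] at e
        calc _ = (b / a) * Complex.exp (((-(θ / 2) : ℝ) : ℂ) * Complex.I) := by ring
          _ = (‖b / a‖ : ℂ) * (Complex.exp (θ * Complex.I) * Complex.exp (((-(θ / 2) : ℝ) : ℂ) * Complex.I)) := by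
            rw [← e]; simp [mul_assoc]
          _ = _ := by
            rw [← Complex.exp_add]; congr 2; push_cast; ring
      rw [this, Complex.re_ofReal_mul, Complex.exp_ofReal_mul_I_re]
      have : 0 < ‖b / a‖ := norm_pos_iff.2 (div_ne_zero hb ha)
      positivity
  have h3 : 0 < ((a + b) * w).re := by rw [add_mul, Complex.add_re]; linarith
  rw [arg_half a b w h1 h2, arg_half a (a + b) w h1 h3, arg_half (a + b) b w h3 h2]
  ring

lemma grid_sum (M : ℕ) (α β : ℕ → ℕ → ℝ) (τ : ℕ → ℝ)
    (htri : ∀ i, i ≤ M + 1 → τ i = α i (i + 1) + β i (i + 2))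
    (hsq : ∀ i j, i + 1 < j → j ≤ M + 2 → ¬ (i = 0 ∧ j = M + 2) →
      α i j + β i (j + 1) = β i j + α (i + 1) j) :
    ∑ i ∈ Finset.range (M + 2), τ i = ∑ j ∈ Finset.range (M + 1), α 0 (j + 1)
      + (β 0 (M + 2) + α 1 (M + 2)) + ∑ j ∈ Finset.range (M + 1), β (j + 1) (M + 3) := by
  have key : ∀ m, m ≤ M + 1 → ∑ i ∈ Finset.range m, τ i =
      ∑ j ∈ Finset.range m, α 0 (j + 1) + ∑ i ∈ Finset.range m, β i (m + 1) := by
    intro m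
    induction m with
    | zero => simp
    | succ m ih =>
      intro hm
      rw [Finset.sum_range_succ, ih (by omega), Finset.sum_range_succ, Finset.sum_range_succ,
        htri m (by omega)]
      have : ∑ i ∈ Finset.range m, (β i (m + 1) - β i (m + 2)) = α 0 (m + 1) - α m (m + 1) := by
        rw [← Finset.sum_range_sub' (fun i => α i (m + 1)) m]
        refine Finset.sum_congr rfl fun i hi => ?_
        have := hsq i (m + 1) (by simpa using hi) (by omega) (by omega)
        linarith
      rw [Finset.sum_sub_distrib] at this
      have e : m + 1 + 1 = m + 2 := rfl
      rw [e]
      linarith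
  rw [Finset.sum_range_succ, key (M + 1) le_rfl, htri (M + 1) le_rfl]
  have : ∑ i ∈ Finset.range M, (β (i + 1) (M + 2) - β (i + 1) (M + 3)) =
      α 1 (M + 2) - α (M + 1) (M + 2) := by
    rw [← Finset.sum_range_sub' (fun i => α (i + 1) (M + 2)) M]
    refine Finset.sum_congr rfl fun i hi => ?_
    have hi' : i < M := by simpa using hi
    have := hsq (i + 1) (M + 2) (by omega) (by omega) (by omega)
    have e : M + 2 + 1 = M + 3 := rfl
    rw [e] at this
    linarith
  rw [Finset.sum_sub_distrib] at this
  rw [Finset.sum_range_succ' (fun i => β i (M + 1 + 1)), Finset.sum_range_succ (fun j => β (j + 1) (M + 3))]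
  have e1 : M + 1 + 1 = M + 2 := rfl
  have e2 : M + 1 + 2 = M + 3 := rfl
  rw [e1, e2]
  linarith

lemma hopf (M : ℕ) (W : ℕ → ℂ) (hclose : W (M + 3) = W 0)
    (hsq : ∀ i j, i + 1 < j → j ≤ M + 2 → ¬ (i = 0 ∧ j = M + 2) →
      Disjoint (segment ℝ (W i) (W (i + 1))) (segment ℝ (W j) (W (j + 1))))
    (hne : ∀ i, i ≤ M + 2 → W (i + 1) - W i ≠ 0)
    (hturn : ∀ i, i ≤ M + 1 → Complex.arg ((W (i + 2) - W (i + 1)) / (W (i + 1) - W i)) ≠ π)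
    (hturn0 : Complex.arg ((W 1 - W 0) / (W 0 - W (M + 2))) ≠ π) :
    ∑ i ∈ Finset.range (M + 2), Complex.arg ((W (i + 2) - W (i + 1)) / (W (i + 1) - W i)) =
    2 * ∑ j ∈ Finset.range (M + 1), Complex.arg ((W (j + 2) - W 0) / (W (j + 1) - W 0)) +
      Complex.arg ((W 1 - W 0) / (W 0 - W (M + 2))) := by
  have := grid_sum M (fun i j => Complex.arg ((W (j + 1) - W i) / (W j - W i)))
    (fun i j => Complex.arg ((W j - W (i + 1)) / (W j - W i)))
    (fun i => Complex.arg ((W (i + 2) - W (i + 1)) / (W (i + 1) - W i)))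
    (by
      intro i hi
      have := arg_triangle (W (i + 1) - W i) (W (i + 2) - W (i + 1)) (hne i (by omega))
        (hne (i + 1) (by omega)) (hturn i hi)
      rw [← this]
      have e : W (i + 1) - W i + (W (i + 2) - W (i + 1)) = W (i + 2) - W i := by ring
      rw [e])
    (by
      intro i j h1 h2 h3
      exact square_seg _ _ _ _ (hsq i j h1 h2 h3))
  rw [this]
  have h0 := arg_triangle (W (M + 2) - W 0) (W 0 - W 1)
    (by
      have := hne (M + 2) le_rfl
      rw [show M + 2 + 1 = M + 3 from rfl, hclose] at this
      intro h; apply this; linear_combination -h)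
    (by
      have := hne 0 (by omega)
      intro h; apply this; simp only [zero_add]; linear_combination -h)
    (by
      rw [← neg_sub (W 1), ← neg_sub (W 0) (W (M + 2)), neg_div_neg_eq]; exact hturn0)
  have e1 : (W 0 - W 1) / (W (M + 2) - W 0) = (W 1 - W 0) / (W 0 - W (M + 2)) := by
    rw [← neg_sub (W 1), ← neg_sub (W 0) (W (M + 2)), neg_div_neg_eq]
  have e2 : W (M + 2) - W 0 + (W 0 - W 1) = W (M + 2) - W 1 := by ring
  rw [e1, e2] at h0
  have e3 : W (M + 2 + 1) = W 0 := hclose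
  have e4 : ∀ j, (W (M + 3) - W (j + 1 + 1)) / (W (M + 3) - W (j + 1)) =
      (W (j + 2) - W 0) / (W (j + 1) - W 0) := by
    intro j
    rw [hclose, ← neg_sub (W (j + 2)), ← neg_sub (W (j + 1)), neg_div_neg_eq]
  simp only [e4]
  simp only [e3, zero_add]
  rw [h0, two_mul]
  have e5 : ∀ j, W (j + 1 + 1) = W (j + 2) := fun j => rfl
  simp only [e5]
  ring

/-- crossing lemma -/
lemma arg_cross (z w : ℂ) (hz : z.im ≠ 0) (hw : w.im ≠ 0)
    (h : z.im * w.im < 0 → z.re * w.im - z.im * w.re ≠ 0) :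
    Complex.arg (w / z) = Complex.arg w - Complex.arg z +
      2 * π * (if 0 < z.im ∧ w.im < 0 ∧ 0 < z.re * w.im - z.im * w.re then 1 else
        if z.im < 0 ∧ 0 < w.im ∧ z.re * w.im - z.im * w.re < 0 then -1 else 0) := by
  have hz0 : z ≠ 0 := by rintro rfl; simp at hz
  have hw0 : w ≠ 0 := by rintro rfl; simp at hw
  set D := z.re * w.im - z.im * w.re with hD
  have hsin : ‖z‖ * ‖w‖ * Real.sin (Complex.arg w - Complex.arg z) = D := by
    rw [Real.sin_sub, hD]
    rw [← Complex.norm_mul_cos_arg z, ← Complex.norm_mul_sin_arg z,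
      ← Complex.norm_mul_cos_arg w, ← Complex.norm_mul_sin_arg w]
    simp only [Complex.norm_mul_cos_arg, Complex.norm_mul_sin_arg]
    have a1 := Complex.norm_mul_cos_arg z
    have a2 := Complex.norm_mul_sin_arg z
    have a3 := Complex.norm_mul_cos_arg w
    have a4 := Complex.norm_mul_sin_arg w
    rw [← a1, ← a2, ← a3, ← a4]
    ring
  have hpos : 0 < ‖z‖ * ‖w‖ := mul_pos (norm_pos_iff.2 hz0) (norm_pos_iff.2 hw0)
  have fin : ∀ c : ℤ, -π < Complex.arg w - Complex.arg z + 2 * π * c →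
      Complex.arg w - Complex.arg z + 2 * π * c ≤ π →
      Complex.arg (w / z) = Complex.arg w - Complex.arg z + 2 * π * c := by
    intro c h1 h2
    have h3 : ((Complex.arg (w / z) : ℝ) : Real.Angle) =
        ((Complex.arg w - Complex.arg z + 2 * π * c : ℝ) : Real.Angle) := by
      rw [Complex.arg_div_coe_angle hw0 hz0, ← Real.Angle.coe_sub,
        Real.Angle.angle_eq_iff_two_pi_dvd_sub]
      exact ⟨-c, by push_cast; ring⟩
    have h4 := congrArg Real.Angle.toReal h3
    rw [Complex.arg_coe_angle_toReal_eq_arg] at h4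
    rw [h4, Real.Angle.toReal_coe_eq_self_iff]
    exact ⟨h1, h2⟩
  have up : ∀ v : ℂ, 0 < v.im → 0 < Complex.arg v ∧ Complex.arg v < π := by
    intro v hv
    have h1 : 0 ≤ Complex.arg v := Complex.arg_nonneg_iff.2 hv.le
    refine ⟨lt_of_le_of_ne h1 ?_, lt_of_le_of_ne (Complex.arg_le_pi v) ?_⟩
    · intro h; have := Complex.arg_eq_zero_iff.1 h.symm; linarith [this.2]
    · intro h; have := Complex.arg_eq_pi_iff.1 h; linarith [this.2]
  have dn : ∀ v : ℂ, v.im < 0 → -π < Complex.arg v ∧ Complex.arg v < 0 := by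
    intro v hv
    exact ⟨Complex.neg_pi_lt_arg v, Complex.arg_neg_iff.2 hv⟩
  rcases lt_or_gt_of_ne hz with hz1 | hz1 <;> rcases lt_or_gt_of_ne hw with hw1 | hw1
  · have a := dn z hz1
    have b := dn w hw1
    rw [if_neg (by intro h; linarith [h.1]), if_neg (by intro h; linarith [h.2.1])]
    simpa using fin 0 (by push_cast; linarith) (by push_cast; linarith)
  · have a := dn z hz1
    have b := up w hw1
    rw [if_neg (by intro h; linarith [h.1])]
    have hD0 := h (mul_neg_of_neg_of_pos hz1 hw1)
    rcases lt_or_gt_of_ne hD0 with hD1 | hD1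
    · rw [if_pos ⟨hz1, hw1, hD1⟩]
      have : π < Complex.arg w - Complex.arg z := by
        by_contra hcon
        push Not at hcon
        have := Real.sin_nonneg_of_nonneg_of_le_pi (x := Complex.arg w - Complex.arg z) (by linarith) hcon
        nlinarith [mul_nonneg hpos.le this]
      simpa using fin (-1) (by push_cast; linarith) (by push_cast; linarith)
    · rw [if_neg (by intro h; linarith [h.2.2])]
      have : Complex.arg w - Complex.arg z ≤ π := by
        by_contra hcon
        push Not at hcon
        have := Real.sin_nonneg_of_nonneg_of_le_pi (x := Complex.arg w - Complex.arg z - π) (by linarith) (by linarith)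
        rw [Real.sin_sub_pi] at this
        nlinarith [mul_nonneg hpos.le this]
      simpa using fin 0 (by push_cast; linarith) (by push_cast; linarith)
  · have a := up z hz1
    have b := dn w hw1
    have hD0 := h (mul_neg_of_pos_of_neg hz1 hw1)
    rcases lt_or_gt_of_ne hD0 with hD1 | hD1
    · rw [if_neg (by intro h; linarith [h.2.2]), if_neg (by intro h; linarith [h.1])]
      have : -π < Complex.arg w - Complex.arg z := by
        by_contra hcon
        push Not at hcon
        have := Real.sin_nonneg_of_nonneg_of_le_pi (x := Complex.arg w - Complex.arg z + 2 * π) (by linarith) (by linarith)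
        rw [Real.sin_add_two_pi] at this
        nlinarith [mul_nonneg hpos.le this]
      simpa using fin 0 (by push_cast; linarith) (by push_cast; linarith)
    · rw [if_pos ⟨hz1, hw1, hD1⟩]
      have : Complex.arg w - Complex.arg z ≤ -π := by
        by_contra hcon
        push Not at hcon
        have := Real.sin_nonpos_of_nonpos_of_neg_pi_le (x := Complex.arg w - Complex.arg z) (by linarith) hcon.le
        nlinarith [mul_nonneg hpos.le (neg_nonneg.2 this)]
      have hlt : Complex.arg w - Complex.arg z < -π ∨ Complex.arg w - Complex.arg z = -π := this.lt_or_eq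
      simpa using fin 1 (by push_cast; linarith) (by push_cast; linarith)
  · have a := up z hz1
    have b := up w hw1
    rw [if_neg (by intro h; linarith [h.2.1]), if_neg (by intro h; linarith [h.1])]
    simpa using fin 0 (by push_cast; linarith) (by push_cast; linarith)

lemma partial_sum_nonneg {ι : Type*} [DecidableEq ι] (u X : ι → ℝ) (s : Finset ι) :
    Set.InjOn X s → (∀ e ∈ s, 0 ≤ ∑ i ∈ s with X i ≤ X e, u i) →
    ∀ M : ℝ, (∀ e ∈ s, X e ≤ M) → 0 ≤ ∑ e ∈ s, u e * (M - X e) := by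
  induction s using Finset.induction_on_max_value X with
  | empty => intros; simp
  | insert a s ha hmax ih =>
    intro hinj hp M hM
    have hlt : ∀ x ∈ s, X x < X a := by
      intro x hx
      refine lt_of_le_of_ne (hmax x hx) fun h => ?_
      have := hinj (by simp [hx]) (by simp) h
      exact ha (this ▸ hx)
    have h1 := ih (hinj.mono (by simp)) (by
      intro e he
      have := hp e (by simp [he])
      rwa [Finset.filter_insert, if_neg (not_le.2 (hlt e he))] at this) (X a) hmax
    have h2 := hp a (by simp)
    rw [Finset.filter_true_of_mem (by
      intro i hi
      rcases Finset.mem_insert.1 hi with rfl | h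
      · exact le_rfl
      · exact hmax i h)] at h2
    rw [Finset.sum_insert ha] at h2 ⊢
    have h3 : ∑ e ∈ s, u e * (M - X e) = ∑ e ∈ s, u e * (X a - X e) + (M - X a) * ∑ e ∈ s, u e := by
      rw [Finset.mul_sum, ← Finset.sum_add_distrib]
      exact Finset.sum_congr rfl fun i _ => by ring
    rw [h3]
    nlinarith [mul_nonneg (sub_nonneg.2 (hM a (by simp))) h2]

lemma sum_range_zmod {n : ℕ} [NeZero n] (f : ZMod n → ℝ) :
    ∑ j ∈ Finset.range n, f (j : ZMod n) = ∑ i : ZMod n, f i := by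
  refine Finset.sum_bij' (fun j _ => (j : ZMod n)) (fun i _ => i.val) ?_ ?_ ?_ ?_ ?_
  · intros; simp
  · intro i _; simpa using ZMod.val_lt i
  · intro j hj; simpa using ZMod.val_cast_of_lt (by simpa using hj)
  · intro i _; simp
  · intros; rfl

lemma sum_range_zmod_shift {n : ℕ} [NeZero n] (f : ZMod n → ℝ) (a : ZMod n) :
    ∑ j ∈ Finset.range n, f (a + (j : ZMod n)) = ∑ i : ZMod n, f i := by
  rw [sum_range_zmod (fun i => f (a + i))]
  exact Equiv.sum_comp (Equiv.addLeft a) f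

lemma natCast_ne_aux {n a b : ℕ} (hab : a < b) (hb : b < a + n) : (b : ZMod n) ≠ (a : ZMod n) := by
  intro h
  have h1 : a ≡ b [MOD n] := ((ZMod.natCast_eq_natCast_iff _ _ _).1 h).symm
  have h2 := (Nat.modEq_iff_dvd' hab.le).1 h1
  have := Nat.le_of_dvd (by omega) h2
  omega

lemma arg_pos_scale (r s : ℝ) (hr : 0 < r) (hs : 0 < s) (a b : ℂ) :
    Complex.arg (((r : ℂ) * a) / ((s : ℂ) * b)) = Complex.arg (a / b) := by
  have : ((r : ℂ) * a) / ((s : ℂ) * b) = ((r / s : ℝ) : ℂ) * (a / b) := by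
    push_cast; exact mul_div_mul_comm _ _ _ _
  rw [this, Complex.arg_real_mul _ (div_pos hr hs)]

lemma edge_sweep (M : ℕ) [NeZero (M + 2)] (hM : 1 ≤ M) (V : ZMod (M + 2) → ℂ)
    (hinj : Function.Injective V)
    (hsimple : ∀ i j : ZMod (M + 2), j ≠ i → j ≠ i + 1 → j + 1 ≠ i →
      Disjoint (segment ℝ (V i) (V (i + 1))) (segment ℝ (V j) (V (j + 1))))
    (hadj : ∀ i : ZMod (M + 2),
      segment ℝ (V i) (V (i + 1)) ∩ segment ℝ (V (i + 1)) (V (i + 2)) = {V (i + 1)})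
    (harg : ∀ i : ZMod (M + 2), Complex.arg ((V (i + 2) - V (i + 1)) / (V (i + 1) - V i)) ≠ π)
    (e : ZMod (M + 2)) (t : ℝ) (ht0 : 0 < t) (ht1 : t < 1) (p : ℂ)
    (hp : p = V e + t * (V (e + 1) - V e)) :
    ∑ i : ZMod (M + 2), Complex.arg ((V (i + 2) - V (i + 1)) / (V (i + 1) - V i)) =
    2 * ∑ j ∈ Finset.range (M + 1),
      Complex.arg ((V (e + 1 + (j : ZMod (M + 2)) + 1) - p) / (V (e + 1 + (j : ZMod (M + 2))) - p)) := by
  have hn0 : ((M : ZMod (M + 2)) + 2) = 0 := by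
    have := ZMod.natCast_self (M + 2); push_cast at this; exact this
  have hone : (1 : ZMod (M + 2)) ≠ 0 := by
    have := natCast_ne_aux (n := M + 2) (a := 0) (b := 1) (by omega) (by omega)
    simpa using this
  have hd : ∀ i, V (i + 1) - V i ≠ 0 := by
    intro i h
    have := hinj (sub_eq_zero.1 h)
    exact hone (by simpa using this)
  obtain ⟨W, hW⟩ : ∃ W : ℕ → ℂ, W = fun k => if k = 0 ∨ k = M + 3 then p else V (e + (k : ZMod (M + 2))) :=
    ⟨_, rfl⟩
  have hW0 : W 0 = p := by rw [hW]; simp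
  have hWn : W (M + 3) = p := by rw [hW]; simp
  have hWk : ∀ k, 1 ≤ k → k ≤ M + 2 → W k = V (e + (k : ZMod (M + 2))) := by
    intro k h1 h2; rw [hW]; simp only; rw [if_neg (by omega)]
  have hr : ∀ k, k ≤ M + 2 → ∃ r : ℝ, 0 < r ∧
      W (k + 1) - W k = (r : ℂ) * (V (e + (k : ZMod (M + 2)) + 1) - V (e + (k : ZMod (M + 2)))) := by
    intro k hk
    rcases Nat.eq_zero_or_pos k with rfl | hk0
    · refine ⟨1 - t, by linarith, ?_⟩
      rw [hWk (0 + 1) (by omega) (by omega), hW0, hp]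
      push_cast
      simp only [zero_add, add_zero]
      ring
    rcases Nat.lt_or_ge k (M + 2) with h | h
    · refine ⟨1, one_pos, ?_⟩
      rw [hWk (k + 1) (by omega) (by omega), hWk k (by omega) (by omega)]
      push_cast
      rw [add_assoc]; ring
    · obtain rfl : k = M + 2 := by omega
      refine ⟨t, ht0, ?_⟩
      rw [show M + 2 + 1 = M + 3 from rfl, hWn, hWk (M + 2) (by omega) (by omega), hp]
      push_cast
      rw [hn0, add_zero]; ring
  have hpseg : p ∈ segment ℝ (V e) (V (e + 1)) := by
    refine ⟨1 - t, t, by linarith, ht0.le, by ring, ?_⟩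
    rw [hp]; simp only [Complex.real_smul]; push_cast; ring
  have hsub : ∀ k, k ≤ M + 2 → segment ℝ (W k) (W (k + 1)) ⊆
      segment ℝ (V (e + (k : ZMod (M + 2)))) (V (e + (k : ZMod (M + 2)) + 1)) := by
    intro k hk
    refine (convex_segment _ _).segment_subset ?_ ?_
    · rcases Nat.eq_zero_or_pos k with rfl | hk0
      · rw [hW0]; simpa using hpseg
      · rw [hWk k (by omega) hk]; exact left_mem_segment _ _ _
    · rcases Nat.lt_or_ge k (M + 2) with h | h
      · rw [hWk (k + 1) (by omega) (by omega)]
        push_cast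
        rw [← add_assoc]; exact right_mem_segment _ _ _
      · obtain rfl : k = M + 2 := by omega
        rw [show M + 2 + 1 = M + 3 from rfl, hWn]
        push_cast
        rw [hn0, add_zero]; exact hpseg
  have hturnEq : ∀ i, i ≤ M + 1 → Complex.arg ((W (i + 2) - W (i + 1)) / (W (i + 1) - W i)) =
      Complex.arg ((V (e + (i : ZMod (M + 2)) + 2) - V (e + (i : ZMod (M + 2)) + 1)) /
        (V (e + (i : ZMod (M + 2)) + 1) - V (e + (i : ZMod (M + 2))))) := by
    intro i hi
    obtain ⟨r, hr0, h1⟩ := hr i (by omega)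
    obtain ⟨s, hs0, h2⟩ := hr (i + 1) (by omega)
    rw [show i + 1 + 1 = i + 2 from rfl] at h2
    rw [h1, h2, arg_pos_scale s r hs0 hr0]
    push_cast
    have e1 : e + ((i : ZMod (M + 2)) + 1) + 1 = e + i + 2 := by ring
    have e2 : e + ((i : ZMod (M + 2)) + 1) = e + i + 1 := by ring
    rw [e1, e2]
  have ht0turn : Complex.arg ((W 1 - W 0) / (W 0 - W (M + 2))) = 0 := by
    obtain ⟨r, hr0, h1⟩ := hr 0 (by omega)
    obtain ⟨s, hs0, h2⟩ := hr (M + 2) (by omega)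
    rw [show M + 2 + 1 = M + 3 from rfl, hWn, ← hW0] at h2
    rw [zero_add] at h1
    rw [h1, h2, arg_pos_scale r s hr0 hs0]
    push_cast
    rw [hn0, add_zero, div_self (hd e), Complex.arg_one]
  have hopfW := hopf M W (by rw [hWn, hW0]) (by
      intro i j hij hj hne
      by_cases hc : j = i + (M + 1)
      · have hi : i = 0 ∨ i = 1 := by omega
        rw [Set.disjoint_left]
        rcases hi with rfl | rfl
        · intro x hx1 hx2
          have h2 := hsub j hj hx2
          have h1 := hsub 0 (by omega) hx1
          have ej : e + (j : ZMod (M + 2)) + 1 = e := by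
            rw [hc]; push_cast; linear_combination hn0
          have ej2 : e + (j : ZMod (M + 2)) + 2 = e + 1 := by linear_combination ej
          have ha := hadj (e + (j : ZMod (M + 2)))
          rw [ej, ej2] at ha
          rw [ej] at h2
          simp only [Nat.cast_zero, add_zero] at h1
          have hx : x = V e := by
            have : x ∈ ({V e} : Set ℂ) := ha ▸ ⟨h2, h1⟩
            exact this
          rw [hW0, zero_add, hWk 1 (by omega) (by omega), Nat.cast_one] at hx1
          obtain ⟨a, b, ha0, hb0, hab, hx'⟩ := hx1
          have hz : ((a * t + b : ℝ) : ℂ) * (V (e + 1) - V e) = 0 := by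
            rw [hx, hp] at hx'
            simp only [Complex.real_smul] at hx'
            have hab' : (a : ℂ) + b = 1 := by exact_mod_cast hab
            push_cast
            linear_combination hx' - hab' * V e
          rcases mul_eq_zero.1 hz with h | h
          · have h' : a * t + b = 0 := by exact_mod_cast h
            have : 0 ≤ a * t := mul_nonneg ha0 ht0.le
            have hb : b = 0 := by linarith
            have : a = 1 := by linarith
            subst this; linarith
          · exact hd e h
        · intro x hx1 hx2
          obtain rfl : j = M + 2 := by omega
          have h2 := hsub (M + 2) hj hx2
          have h1 := hsub 1 (by omega) hx1
          have ej : e + ((M + 2 : ℕ) : ZMod (M + 2)) = e := by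
            push_cast; linear_combination hn0
          rw [ej] at h2
          rw [Nat.cast_one] at h1
          have e2 : e + 1 + 1 = e + 2 := by ring
          rw [e2] at h1
          have hx : x = V (e + 1) := by
            have : x ∈ ({V (e + 1)} : Set ℂ) := hadj e ▸ ⟨h2, h1⟩
            exact this
          rw [show M + 2 + 1 = M + 3 from rfl, hWn, hWk (M + 2) (by omega) (by omega), ej] at hx2
          obtain ⟨a, b, ha0, hb0, hab, hx'⟩ := hx2
          have hz : ((a + b * (1 - t) : ℝ) : ℂ) * (V (e + 1) - V e) = 0 := by
            rw [hx, hp] at hx'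
            simp only [Complex.real_smul] at hx'
            have hab' : (a : ℂ) + b = 1 := by exact_mod_cast hab
            push_cast
            linear_combination -hx' + hab' * V (e + 1)
          rcases mul_eq_zero.1 hz with h | h
          · have h' : a + b * (1 - t) = 0 := by exact_mod_cast h
            have : 0 ≤ b * (1 - t) := mul_nonneg hb0 (by linarith)
            have hb : a = 0 := by linarith
            have : b = 1 := by linarith
            subst this; linarith
          · exact hd e h
      · refine Disjoint.mono (hsub i (by omega)) (hsub j hj) (hsimple _ _ ?_ ?_ ?_)
        · intro h
          exact natCast_ne_aux (n := M + 2) (a := i) (b := j) (by omega) (by omega)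
            (by linear_combination h)
        · intro h
          exact natCast_ne_aux (n := M + 2) (a := i + 1) (b := j) (by omega) (by omega)
            (by push_cast; linear_combination h)
        · intro h
          exact natCast_ne_aux (n := M + 2) (a := i) (b := j + 1) (by omega) (by omega)
            (by push_cast; linear_combination h))
    (by
      intro i hi
      obtain ⟨r, hr0, h1⟩ := hr i hi
      rw [h1]
      exact mul_ne_zero (by exact_mod_cast hr0.ne') (hd _))
    (by
      intro i hi
      rw [hturnEq i hi]; exact harg _)
    (by rw [ht0turn]; exact Real.pi_pos.ne)
  rw [ht0turn, add_zero] at hopfW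
  rw [← sum_range_zmod_shift (fun i => Complex.arg ((V (i + 2) - V (i + 1)) / (V (i + 1) - V i))) e]
  rw [← Finset.sum_congr rfl (fun i hi => hturnEq i (by have := Finset.mem_range.1 hi; omega)), hopfW]
  congr 1
  refine Finset.sum_congr rfl fun j hj => ?_
  have hj' := Finset.mem_range.1 hj
  rw [hWk (j + 2) (by omega) (by omega), hWk (j + 1) (by omega) (by omega), hW0]
  push_cast
  have e1 : e + ((j : ZMod (M + 2)) + 2) = e + 1 + j + 1 := by ring
  have e2 : e + ((j : ZMod (M + 2)) + 1) = e + 1 + j := by ring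
  rw [e1, e2]


/-- signed crossing number of the directed edge from `a` to `b` with the line at height `y` -/
noncomputable def crossU (a b : ℂ) (y : ℝ) : ℝ :=
  (if y ≤ b.im then 1 else 0) - (if y ≤ a.im then 1 else 0)

/-- abscissa of the crossing of the line through `a` and `b` with the line at height `y` -/
noncomputable def crossX (a b : ℂ) (y : ℝ) : ℝ :=
  a.re + (y - a.im) * ((b.re - a.re) / (b.im - a.im))

lemma crossU_cases (a b : ℂ) (y : ℝ) (ha : a.im ≠ y) (hb : b.im ≠ y) :
    (crossU a b y = 1 ∧ a.im < y ∧ y < b.im) ∨ (crossU a b y = -1 ∧ b.im < y ∧ y < a.im) ∨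
    (crossU a b y = 0 ∧ 0 < (a.im - y) * (b.im - y)) := by
  unfold crossU
  rcases lt_or_gt_of_ne ha with h1 | h1 <;> rcases lt_or_gt_of_ne hb with h2 | h2
  · right; right
    rw [if_neg (by linarith), if_neg (by linarith)]
    exact ⟨by simp, mul_pos_of_neg_of_neg (by linarith) (by linarith)⟩
  · left
    rw [if_pos (by linarith), if_neg (by linarith)]
    exact ⟨by simp, h1, h2⟩
  · right; left
    rw [if_neg (by linarith), if_pos (by linarith)]
    exact ⟨by simp, h2, h1⟩
  · right; right
    rw [if_pos (by linarith), if_pos (by linarith)]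
    exact ⟨by simp, mul_pos (by linarith) (by linarith)⟩

lemma cross_point (a b : ℂ) (y : ℝ) (ha : a.im ≠ y) (hb : b.im ≠ y) (hu : crossU a b y ≠ 0) :
    ∃ t : ℝ, 0 < t ∧ t < 1 ∧ (⟨crossX a b y, y⟩ : ℂ) = a + t * (b - a) := by
  have hlt : (a.im < y ∧ y < b.im) ∨ (b.im < y ∧ y < a.im) := by
    rcases crossU_cases a b y ha hb with h | h | h
    · exact Or.inl h.2
    · exact Or.inr h.2
    · exact absurd h.1 hu
  have hne : b.im - a.im ≠ 0 := by
    rcases hlt with h | h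
    · exact (by linarith : 0 < b.im - a.im).ne'
    · exact (by linarith : b.im - a.im < 0).ne
  refine ⟨(y - a.im) / (b.im - a.im), ?_, ?_, ?_⟩
  · rcases hlt with h | h
    · exact div_pos (by linarith) (by linarith)
    · exact div_pos_of_neg_of_neg (by linarith) (by linarith)
  · rcases hlt with h | h
    · rw [div_lt_one (by linarith)]; linarith
    · rw [div_lt_one_of_neg (by linarith)]; linarith
  · apply Complex.ext
    · simp only [Complex.add_re, Complex.re_ofReal_mul, Complex.sub_re, crossX]
      ring
    · simp only [Complex.add_im, Complex.im_ofReal_mul, Complex.sub_im]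
      rw [div_mul_cancel₀ _ hne]; ring

lemma arg_cross' (a b : ℂ) (x y : ℝ) (ha : a.im ≠ y) (hb : b.im ≠ y)
    (h : crossU a b y ≠ 0 → crossX a b y ≠ x) :
    Complex.arg ((b - ⟨x, y⟩) / (a - ⟨x, y⟩)) = Complex.arg (b - ⟨x, y⟩) - Complex.arg (a - ⟨x, y⟩) -
      2 * π * (if crossX a b y < x then crossU a b y else 0) := by
  set z : ℂ := a - ⟨x, y⟩ with hz
  set w : ℂ := b - ⟨x, y⟩ with hw
  have hzi : z.im = a.im - y := by simp [hz]
  have hwi : w.im = b.im - y := by simp [hw]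
  have hzr : z.re = a.re - x := by simp [hz]
  have hwr : w.re = b.re - x := by simp [hw]
  have hD : b.im - a.im ≠ 0 →
      (crossX a b y - x) * (b.im - a.im) = z.re * w.im - z.im * w.re := by
    intro h0
    rw [hzi, hwi, hzr, hwr, crossX]
    field_simp
    ring
  have key := arg_cross z w (by rw [hzi]; exact sub_ne_zero.2 ha) (by rw [hwi]; exact sub_ne_zero.2 hb)
    (by
      intro hlt
      rw [hzi, hwi] at hlt
      have hu : crossU a b y ≠ 0 ∧ b.im - a.im ≠ 0 := by
        rcases crossU_cases a b y ha hb with h | h | h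
        · exact ⟨by rw [h.1]; norm_num, (by linarith [h.2.1, h.2.2] : 0 < b.im - a.im).ne'⟩
        · exact ⟨by rw [h.1]; norm_num, (by linarith [h.2.1, h.2.2] : b.im - a.im < 0).ne⟩
        · linarith [h.2]
      rw [← hD hu.2]
      exact mul_ne_zero (sub_ne_zero.2 (h hu.1)) hu.2)
  rw [key]
  rcases crossU_cases a b y ha hb with hc | hc | hc
  · obtain ⟨h1, h2, h3⟩ := hc
    have hpos : 0 < b.im - a.im := by linarith
    rw [if_neg (by intro h; linarith [h.1]), h1, ← hD hpos.ne']
    by_cases hx : crossX a b y < x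
    · rw [if_pos ⟨by linarith, by linarith, mul_neg_of_neg_of_pos (by linarith) hpos⟩, if_pos hx]
      ring
    · rw [if_neg (by intro h; exact hx (by nlinarith [h.2.2])), if_neg hx]
      ring
  · obtain ⟨h1, h2, h3⟩ := hc
    have hneg : b.im - a.im < 0 := by linarith
    rw [h1, ← hD hneg.ne]
    by_cases hx : crossX a b y < x
    · rw [if_pos ⟨by linarith, by linarith, mul_pos_of_neg_of_neg (by linarith) hneg⟩, if_pos hx]
      ring
    · rw [if_neg (by intro h; exact hx (by nlinarith [h.2.2])), if_neg (by intro h; linarith [h.1]), if_neg hx]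
      ring
  · obtain ⟨h1, h2⟩ := hc
    rw [← hzi, ← hwi] at h2
    rw [if_neg (by intro h; nlinarith [h.1, h.2.1]), if_neg (by intro h; nlinarith [h.1, h.2.1]), h1]
    simp

lemma arg_opp (a b : ℂ) (t : ℝ) (p : ℂ) (ht0 : 0 < t) (ht1 : t < 1) (hp : p = a + t * (b - a))
    (ha : a.im ≠ p.im) (hb : b.im ≠ p.im) :
    Complex.arg (a - p) - Complex.arg (b - p) = - π * crossU a b p.im := by
  have h1 : a - p = (t : ℂ) * (-(b - a)) := by rw [hp]; ring
  have h2 : b - p = ((1 - t : ℝ) : ℂ) * (b - a) := by rw [hp]; push_cast; ring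
  have hi : p.im = a.im + t * (b.im - a.im) := by rw [hp]; simp
  rw [h1, h2, Complex.arg_real_mul _ ht0, Complex.arg_real_mul _ (by linarith)]
  rcases crossU_cases a b p.im ha hb with h | h | h
  · have : 0 < (b - a).im := by simp only [Complex.sub_im]; linarith [h.2.1, h.2.2]
    rw [h.1, Complex.arg_neg_eq_arg_sub_pi_of_im_pos this]; ring
  · have : (b - a).im < 0 := by simp only [Complex.sub_im]; linarith [h.2.1, h.2.2]
    rw [h.1, Complex.arg_neg_eq_arg_add_pi_of_im_neg this]; ring
  · exfalso
    have h3 : (a.im - p.im) * (b.im - p.im) = - (t * (1 - t)) * (b.im - a.im) ^ 2 := by rw [hi]; ring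
    have : 0 < t * (1 - t) := mul_pos ht0 (by linarith)
    nlinarith [h.2, mul_nonneg this.le (sq_nonneg (b.im - a.im))]

lemma sum_shift {n : ℕ} [NeZero n] (f : ZMod n → ℝ) : ∑ i : ZMod n, f (i + 1) = ∑ i : ZMod n, f i :=
  Equiv.sum_comp (Equiv.addRight (1 : ZMod n)) f

lemma crossX_inj (M : ℕ) [NeZero (M + 2)] (V : ZMod (M + 2) → ℂ)
    (hsimple : ∀ i j : ZMod (M + 2), j ≠ i → j ≠ i + 1 → j + 1 ≠ i →
      Disjoint (segment ℝ (V i) (V (i + 1))) (segment ℝ (V j) (V (j + 1))))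
    (hadj : ∀ i : ZMod (M + 2),
      segment ℝ (V i) (V (i + 1)) ∩ segment ℝ (V (i + 1)) (V (i + 2)) = {V (i + 1)})
    (y : ℝ) (hy : ∀ i, (V i).im ≠ y) (i e : ZMod (M + 2)) (hie : i ≠ e)
    (hi : crossU (V i) (V (i + 1)) y ≠ 0) (he : crossU (V e) (V (e + 1)) y ≠ 0) :
    crossX (V i) (V (i + 1)) y ≠ crossX (V e) (V (e + 1)) y := by
  intro hX
  have hmem : ∀ k, crossU (V k) (V (k + 1)) y ≠ 0 →
      (⟨crossX (V k) (V (k + 1)) y, y⟩ : ℂ) ∈ segment ℝ (V k) (V (k + 1)) := by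
    intro k hk
    obtain ⟨t, h0, h1, h2⟩ := cross_point _ _ y (hy k) (hy (k + 1)) hk
    rw [h2]
    refine ⟨1 - t, t, by linarith, h0.le, by ring, ?_⟩
    simp only [Complex.real_smul]; push_cast; ring
  have m1 := hmem i hi
  have m2 := hmem e he
  rw [hX] at m1
  have adj : ∀ k, (⟨crossX (V e) (V (e + 1)) y, y⟩ : ℂ) ∈ segment ℝ (V k) (V (k + 1)) →
      (⟨crossX (V e) (V (e + 1)) y, y⟩ : ℂ) ∈ segment ℝ (V (k + 1)) (V (k + 1 + 1)) → False := by
    intro k h1 h2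
    rw [show k + 1 + 1 = k + 2 by ring] at h2
    have h3 : (⟨crossX (V e) (V (e + 1)) y, y⟩ : ℂ) ∈ ({V (k + 1)} : Set ℂ) := hadj k ▸ ⟨h1, h2⟩
    have h4 := congrArg Complex.im (Set.mem_singleton_iff.1 h3)
    exact hy (k + 1) h4.symm
  by_cases c1 : i = e + 1
  · subst c1; exact adj e m2 m1
  by_cases c2 : i + 1 = e
  · subst c2; exact adj i m1 m2
  exact Set.disjoint_left.1 (hsimple e i hie c1 c2) m2 m1

lemma turn_eq (M : ℕ) [NeZero (M + 2)] (hM : 1 ≤ M) (V : ZMod (M + 2) → ℂ)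
    (hinj : Function.Injective V)
    (hsimple : ∀ i j : ZMod (M + 2), j ≠ i → j ≠ i + 1 → j + 1 ≠ i →
      Disjoint (segment ℝ (V i) (V (i + 1))) (segment ℝ (V j) (V (j + 1))))
    (hadj : ∀ i : ZMod (M + 2),
      segment ℝ (V i) (V (i + 1)) ∩ segment ℝ (V (i + 1)) (V (i + 2)) = {V (i + 1)})
    (harg : ∀ i : ZMod (M + 2), Complex.arg ((V (i + 2) - V (i + 1)) / (V (i + 1) - V i)) ≠ π)
    (y : ℝ) (hy : ∀ i, (V i).im ≠ y) (e : ZMod (M + 2))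
    (he : crossU (V e) (V (e + 1)) y ≠ 0) :
    ∑ i : ZMod (M + 2), Complex.arg ((V (i + 2) - V (i + 1)) / (V (i + 1) - V i)) =
    -(2 * π) * (crossU (V e) (V (e + 1)) y + 2 * ∑ i : ZMod (M + 2),
      if crossX (V i) (V (i + 1)) y < crossX (V e) (V (e + 1)) y then crossU (V i) (V (i + 1)) y
        else 0) := by
  obtain ⟨t, ht0, ht1, hp⟩ := cross_point _ _ y (hy e) (hy (e + 1)) he
  set x := crossX (V e) (V (e + 1)) y with hx
  rw [edge_sweep M hM V hinj hsimple hadj harg e t ht0 ht1 ⟨x, y⟩ hp]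
  have hn0 : ((M : ZMod (M + 2)) + 2) = 0 := by
    have := ZMod.natCast_self (M + 2); push_cast at this; exact this
  set g : ZMod (M + 2) → ℝ := fun i =>
    if crossX (V i) (V (i + 1)) y < x then crossU (V i) (V (i + 1)) y else 0 with hg
  have h1 : ∀ j ∈ Finset.range (M + 1),
      Complex.arg ((V (e + 1 + (j : ZMod (M + 2)) + 1) - ⟨x, y⟩) / (V (e + 1 + (j : ZMod (M + 2))) - ⟨x, y⟩))
      = (Complex.arg (V (e + 1 + ((j + 1 : ℕ) : ZMod (M + 2))) - ⟨x, y⟩)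
        - Complex.arg (V (e + 1 + (j : ZMod (M + 2))) - ⟨x, y⟩))
        - 2 * π * g (e + 1 + (j : ZMod (M + 2))) := by
    intro j hj
    have hj' := Finset.mem_range.1 hj
    rw [arg_cross' _ _ x y (hy _) (hy _)]
    · push_cast
      rw [← add_assoc]
    · intro hu
      refine crossX_inj M V hsimple hadj y hy _ e ?_ hu he
      intro h
      refine natCast_ne_aux (n := M + 2) (a := 0) (b := j + 1) (by omega) (by omega) ?_
      push_cast; linear_combination h
  rw [Finset.sum_congr rfl h1, Finset.sum_sub_distrib, ← Finset.mul_sum,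
    Finset.sum_range_sub (fun j : ℕ => Complex.arg (V (e + 1 + (j : ZMod (M + 2))) - ⟨x, y⟩))]
  have hend : e + 1 + ((M + 1 : ℕ) : ZMod (M + 2)) = e := by push_cast; linear_combination hn0
  have h2 := sum_range_zmod_shift g (e + 1)
  have hge : g e = 0 := by simp [hg, hx]
  have h4 : g (e + 1 + ((M + 1 : ℕ) : ZMod (M + 2))) = 0 := by rw [hend, hge]
  have h5 := Finset.sum_range_succ (fun j : ℕ => g (e + 1 + (j : ZMod (M + 2)))) (M + 1)
  have h3 : ∑ j ∈ Finset.range (M + 1), g (e + 1 + (j : ZMod (M + 2))) = ∑ i, g i := by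
    linarith
  rw [h3, hend, Nat.cast_zero, add_zero]
  have := arg_opp (V e) (V (e + 1)) t ⟨x, y⟩ ht0 ht1 hp (hy e) (hy (e + 1))
  rw [this]
  ring

lemma scan_pos {n : ℕ} [NeZero n] (V : ZMod n → ℂ)
    (hccw : 0 < ∑ i : ZMod n, ((starRingEnd ℂ) (V i) * V (i + 1)).im) :
    ∃ y : ℝ, (∀ i, (V i).im ≠ y) ∧
      0 < ∑ i : ZMod n, crossU (V i) (V (i + 1)) y * crossX (V i) (V (i + 1)) y := by
  by_contra hcon
  push Not at hcon
  have hfun : ∀ a b : ℂ, (fun y => crossU a b y * crossX a b y) = fun y =>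
      (Set.Ioc a.im b.im).indicator (crossX a b) y - (Set.Ioc b.im a.im).indicator (crossX a b) y := by
    intro a b
    funext y
    simp only [Set.indicator, Set.mem_Ioc, crossU]
    by_cases h1 : y ≤ b.im <;> by_cases h2 : y ≤ a.im <;> simp [h1, h2, not_lt.2, not_le.1]
  have hcont : ∀ a b : ℂ, Continuous (crossX a b) := by
    intro a b; unfold crossX; fun_prop
  have hint1 : ∀ (a b : ℂ) (s t : ℝ), MeasureTheory.Integrable ((Set.Ioc s t).indicator (crossX a b)) := by
    intro a b s t
    rw [MeasureTheory.integrable_indicator_iff measurableSet_Ioc]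
    exact (hcont a b).integrableOn_Ioc
  have hint : ∀ a b : ℂ, MeasureTheory.Integrable (fun y => crossU a b y * crossX a b y) := by
    intro a b
    rw [hfun]
    exact (hint1 _ _ _ _).sub (hint1 _ _ _ _)
  have hval : ∀ a b : ℂ, ∫ y, crossU a b y * crossX a b y = (b.im - a.im) * (a.re + b.re) / 2 := by
    intro a b
    rw [hfun, MeasureTheory.integral_sub (hint1 _ _ _ _) (hint1 _ _ _ _),
      MeasureTheory.integral_indicator measurableSet_Ioc,
      MeasureTheory.integral_indicator measurableSet_Ioc]
    change (∫ y in a.im..b.im, crossX a b y) = _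
    unfold crossX
    rw [intervalIntegral.integral_add (by simp) (Continuous.intervalIntegrable (by fun_prop) _ _),
      intervalIntegral.integral_mul_const, intervalIntegral.integral_sub (by simp) (by simp)]
    simp only [intervalIntegral.integral_const, integral_id, smul_eq_mul]
    by_cases h : b.im - a.im = 0
    · rw [h]; simp
    · field_simp
      ring
  have hsum : ∫ y, ∑ i : ZMod n, crossU (V i) (V (i + 1)) y * crossX (V i) (V (i + 1)) y =
      (∑ i : ZMod n, ((starRingEnd ℂ) (V i) * V (i + 1)).im) / 2 := by
    rw [MeasureTheory.integral_finsetSum _ (fun i _ => hint _ _)]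
    simp only [hval]
    have h1 := sum_shift (fun i => (V i).re * (V i).im / 2)
    have h2 : ∀ i, ((V (i + 1)).im - (V i).im) * ((V i).re + (V (i + 1)).re) / 2 =
        ((starRingEnd ℂ) (V i) * V (i + 1)).im / 2 + ((V (i + 1)).re * (V (i + 1)).im / 2
          - (V i).re * (V i).im / 2) := by
      intro i
      simp only [Complex.mul_im, Complex.conj_re, Complex.conj_im]
      ring
    simp only [h2]
    rw [Finset.sum_add_distrib, Finset.sum_sub_distrib, h1, Finset.sum_div]
    ring
  have hle : ∫ y, ∑ i : ZMod n, crossU (V i) (V (i + 1)) y * crossX (V i) (V (i + 1)) y ≤ 0 := by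
    apply MeasureTheory.integral_nonpos_of_ae
    have hfin : (Set.range fun i => (V i).im).Finite := Set.finite_range _
    have : ∀ᵐ y : ℝ, y ∉ Set.range fun i => (V i).im :=
      MeasureTheory.compl_mem_ae_iff.2 (hfin.measure_zero _)
    filter_upwards [this] with y hy
    exact hcon y fun i h => hy ⟨i, h⟩
  linarith

theorem stmt5 {n : ℕ} [NeZero n] (hn : 3 ≤ n) (V : ZMod n → ℂ) (angle : ZMod n → ℝ)
    (hinj : Function.Injective V)
    (hsimple : ∀ i j : ZMod n, j ≠ i → j ≠ i + 1 → j + 1 ≠ i →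
      Disjoint (segment ℝ (V i) (V (i + 1))) (segment ℝ (V j) (V (j + 1))))
    (hadj : ∀ i : ZMod n,
      segment ℝ (V i) (V (i + 1)) ∩ segment ℝ (V (i + 1)) (V (i + 2)) = {V (i + 1)})
    (hccw : 0 < ∑ i : ZMod n, ((starRingEnd ℂ) (V i) * V (i + 1)).im)
    (hang : ∀ i : ZMod n, 0 < angle i ∧ angle i < 2 * π ∧
      π - angle i = Complex.arg ((V (i + 2) - V (i + 1)) / (V (i + 1) - V i))) :
    (1 / (2 * π)) * ∑ i : ZMod n, (π - angle i) = 1 := by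
  obtain ⟨M, rfl⟩ : ∃ M, n = M + 2 := ⟨n - 2, by omega⟩
  have harg : ∀ i : ZMod (M + 2), Complex.arg ((V (i + 2) - V (i + 1)) / (V (i + 1) - V i)) ≠ π := by
    intro i h
    have := hang i
    linarith [this.1, this.2.2]
  obtain ⟨y, hy, hA⟩ := scan_pos V hccw
  have key := turn_eq M (by omega) V hinj hsimple hadj harg y hy
  rw [Finset.sum_congr rfl (fun i _ => (hang i).2.2)]
  set T := ∑ i : ZMod (M + 2), Complex.arg ((V (i + 2) - V (i + 1)) / (V (i + 1) - V i)) with hT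
  have hXinj := crossX_inj M V hsimple hadj y hy
  have hcases := fun i => crossU_cases (V i) (V (i + 1)) y (hy i) (hy (i + 1))
  have hU0 : ∑ i : ZMod (M + 2), crossU (V i) (V (i + 1)) y = 0 := by
    simp only [crossU]
    rw [Finset.sum_sub_distrib, sum_shift (fun i => if y ≤ (V i).im then (1 : ℝ) else 0), sub_self]
  generalize hu : (fun i => crossU (V i) (V (i + 1)) y) = u at *
  generalize hX : (fun i => crossX (V i) (V (i + 1)) y) = X at *
  have hu' : ∀ i, crossU (V i) (V (i + 1)) y = u i := fun i => by rw [← hu]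
  have hX' : ∀ i, crossX (V i) (V (i + 1)) y = X i := fun i => by rw [← hX]
  simp only [hu', hX'] at key hA hXinj hcases hU0
  classical
  set s : Finset (ZMod (M + 2)) := Finset.univ.filter fun i => u i ≠ 0 with hs
  have hsne : s.Nonempty := by
    by_contra hne
    rw [Finset.not_nonempty_iff_eq_empty] at hne
    have : ∀ i, u i = 0 := by
      intro i
      by_contra h
      have : i ∈ s := by simp [hs, h]
      rw [hne] at this; simp at this
    simp [this] at hA
  obtain ⟨e0, he0, hmin⟩ := s.exists_min_image X hsne
  have he0' : u e0 ≠ 0 := by simpa [hs] using he0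
  have hL0 : ∑ i : ZMod (M + 2), (if X i < X e0 then u i else 0) = 0 := by
    refine Finset.sum_eq_zero fun i _ => ?_
    split_ifs with h
    · by_contra hi
      have := hmin i (by simp [hs, hi])
      linarith
    · rfl
  have k0 := key e0 he0'
  rw [hL0] at k0
  have hpi := Real.pi_pos
  rcases hcases e0 with h | h | h
  · exfalso
    rw [h.1] at k0
    have hS : ∀ f : ZMod (M + 2) → ℝ, (∀ i, u i = 0 → f i = 0) → ∑ i ∈ s, f i = ∑ i, f i := by
      intro f hf
      refine Finset.sum_subset (Finset.subset_univ _) fun i _ hi => hf i ?_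
      by_contra h; exact hi (by simp [hs, h])
    have hInjOn : Set.InjOn X s := by
      intro i hi j hj hij
      by_contra hne
      exact hXinj i j hne (by simpa [hs] using hi) (by simpa [hs] using hj) hij
    obtain ⟨em, hem, hmax⟩ := s.exists_max_image X hsne
    have hps := partial_sum_nonneg u X s hInjOn (by
      intro e he
      have he' : u e ≠ 0 := by simpa [hs] using he
      have k := key e he'
      have h1 : ∑ i ∈ s with X i ≤ X e, u i = u e + ∑ i, (if X i < X e then u i else 0) := by
        rw [Finset.sum_filter, ← hS (fun i => if X i < X e then u i else 0)
          (by intro i hi; simp [hi]), ← Finset.sum_erase_add s _ he, ← Finset.sum_erase_add s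
            (fun i => if X i < X e then u i else 0) he]
        simp only [le_refl, if_true, lt_irrefl, if_false, add_zero]
        rw [add_comm]
        congr 1
        refine Finset.sum_congr rfl fun i hi => ?_
        have hi2 := Finset.mem_erase.1 hi
        have : X i ≠ X e := fun h => hi2.1 (hInjOn hi2.2 he h)
        have : X i ≤ X e ↔ X i < X e := ⟨fun h => lt_of_le_of_ne h this, le_of_lt⟩
        simp only [this]
      rw [h1]
      set L := ∑ i, (if X i < X e then u i else 0)
      have h2 : u e + 2 * L = 1 := by
        have : (2 * π) * (u e + 2 * L) = (2 * π) * 1 := by linarith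
        exact mul_left_cancel₀ (by positivity) this
      rcases hcases e with h | h | h
      · linarith [h.1]
      · linarith [h.1]
      · exact absurd h.1 he') (X em) hmax
    rw [hS _ (by intro i hi; simp [hi])] at hps
    simp only [mul_sub] at hps
    rw [Finset.sum_sub_distrib, ← Finset.sum_mul, hU0] at hps
    linarith
  · rw [h.1] at k0
    rw [k0]
    field_simp
    ring
  · exact absurd h.1 he0'
end

section
/- Every convex generic coherent hyperbolic polygon with at least four vertices has at least four locally extremal vertices; equivalently, the cyclic sequence of circumradii R₁,…,Rₙ (Rᵢ the circumradius of triangle Vᵢ₋₁VᵢVᵢ₊₁) has at least two local maxima and at least two local minima. -/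
/-- Geodesic segment in the hyperbolic plane (upper half-plane model), described
metrically via betweenness. -/
def GSeg (A B : UpperHalfPlane) : Set UpperHalfPlane :=
  {z | dist A z + dist z B = dist A B}

/-- Three points lie on a common geodesic iff one of them is between the other two. -/
def HCollinear (A B C : UpperHalfPlane) : Prop :=
  A ∈ GSeg B C ∨ B ∈ GSeg A C ∨ C ∈ GSeg A B

/-- A hyperbolically convex subset of the hyperbolic plane. -/
def HConvexSet (S : Set UpperHalfPlane) : Prop :=
  ∀ a ∈ S, ∀ b ∈ S, GSeg a b ⊆ S

/-- Hyperbolic convex hull. -/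
def HConvexHull (S : Set UpperHalfPlane) : Set UpperHalfPlane :=
  ⋂₀ {T | HConvexSet T ∧ S ⊆ T}

/-- The infinite cone with apex `V` spanned by the rays from `V` through `A` and `B`:
points lying on a geodesic ray from `V` through some point of the segment `AB`. -/
def HCone (V A B : UpperHalfPlane) : Set UpperHalfPlane :=
  {z | ∃ w ∈ GSeg A B, w ∈ GSeg V z ∨ z ∈ GSeg V w}

/-- The unsigned hyperbolic angle at `B` in the triangle `A B C`, via the hyperbolic
law of cosines. -/
noncomputable def hAngle (A B C : UpperHalfPlane) : ℝ :=
  Real.arccos ((Real.cosh (dist B A) * Real.cosh (dist B C) - Real.cosh (dist A C)) /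
    (Real.sinh (dist B A) * Real.sinh (dist B C)))

/-- The mediatrix (perpendicular bisector) of the segment `AB`: the set of points
equidistant from `A` and `B`. -/
def Mediatrix (A B : UpperHalfPlane) : Set UpperHalfPlane :=
  {z | dist z A = dist z B}

open Real


namespace FV

/-- Three dimensional real space. -/
abbrev E := ℝ × ℝ × ℝ

/-- determinant -/
def det (u v w : E) : ℝ :=
  u.1 * (v.2.1 * w.2.2 - v.2.2 * w.2.1) - u.2.1 * (v.1 * w.2.2 - v.2.2 * w.1)
    + u.2.2 * (v.1 * w.2.1 - v.2.1 * w.1)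

/-- cross product -/
def cr (u v : E) : E :=
  (u.2.1 * v.2.2 - u.2.2 * v.2.1, u.2.2 * v.1 - u.1 * v.2.2, u.1 * v.2.1 - u.2.1 * v.1)

/-- dot product -/
def dt (u v : E) : ℝ := u.1 * v.1 + u.2.1 * v.2.1 + u.2.2 * v.2.2

/-- Lorentzian dual -/
noncomputable def du (u : E) : E := (u.2.1 / 2, u.1 / 2, - u.2.2)

/-- reflection -/
def fl (u : E) : E := (u.1, u.2.1, - u.2.2)

/-- hyperboloid embedding -/
noncomputable def vec (z : UpperHalfPlane) : E :=
  ((z.re ^ 2 + z.im ^ 2) / z.im, 1 / z.im, z.re / z.im)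

theorem vec_fst_pos (z : UpperHalfPlane) : 0 < (vec z).1 := by
  have := z.im_pos
  simp only [vec]; positivity

theorem vec_snd_pos (z : UpperHalfPlane) : 0 < (vec z).2.1 := by
  have := z.im_pos
  simp only [vec]; positivity

theorem vec_unit (z : UpperHalfPlane) :
    (vec z).1 * (vec z).2.1 - (vec z).2.2 ^ 2 = 1 := by
  have := z.im_pos.ne'
  simp only [vec]; field_simp; ring

theorem cosh_dist_vec (z w : UpperHalfPlane) :
    Real.cosh (dist z w) = dt (du (vec z)) (vec w) := by
  have h1 := z.im_pos.ne'
  have h2 := w.im_pos.ne'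
  rw [UpperHalfPlane.cosh_dist']
  simp only [vec, du, dt]; field_simp; ring

theorem exists_vec (u : E) (h1 : 0 < u.2.1) (h2 : u.1 * u.2.1 - u.2.2 ^ 2 = 1) :
    ∃ z, vec z = u := by
  obtain ⟨a, b, c⟩ := u
  simp only at h1 h2
  refine ⟨⟨⟨c / b, 1 / b⟩, by simpa using h1⟩, ?_⟩
  simp only [vec, UpperHalfPlane.re, UpperHalfPlane.im]
  refine Prod.ext ?_ (Prod.ext ?_ ?_) <;> simp only <;> field_simp
  linarith

theorem vec_inj {z w : UpperHalfPlane} (h : vec z = vec w) : z = w := by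
  have h1 := z.im_pos.ne'
  have h2 := w.im_pos.ne'
  simp only [vec, Prod.mk.injEq] at h
  obtain ⟨-, hb, hc⟩ := h
  have him : z.im = w.im := by simpa using hb
  rw [him] at hc
  have hre : z.re = w.re := by field_simp at hc; exact hc
  exact UpperHalfPlane.ext (Complex.ext hre him)

theorem eq_of_form {z w : UpperHalfPlane} (h : dt (du (vec z)) (vec w) = 1) : z = w := by
  rw [← cosh_dist_vec] at h
  by_contra hne
  exact absurd h (Real.one_lt_cosh.mpr (dist_pos.mpr hne).ne').ne'

theorem form_self (z : UpperHalfPlane) : dt (du (vec z)) (vec z) = 1 := by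
  rw [← cosh_dist_vec]; simp

theorem form_comm (u v : E) : dt (du u) v = dt (du v) u := by
  simp only [dt, du]; ring

theorem form_lin (x y : ℝ) (u v w : E) :
    dt (du (x • u + y • v)) w = x * dt (du u) w + y * dt (du v) w := by
  simp only [dt, du, Prod.fst_add, Prod.snd_add, Prod.smul_fst, Prod.smul_snd, smul_eq_mul]; ring

theorem form_lin' (x y : ℝ) (u v w : E) :
    dt (du w) (x • u + y • v) = x * dt (du w) u + y * dt (du w) v := by
  rw [form_comm, form_lin, form_comm u, form_comm v]

theorem mem_gseg {A B z : UpperHalfPlane} {α β : ℝ} (hα : 0 ≤ α) (hβ : 0 ≤ β)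
    (h : vec z = α • vec A + β • vec B) : z ∈ GSeg A B := by
  have hc := cosh_dist_vec A B
  have hz := form_self z
  have ha := cosh_dist_vec A z
  have hb := cosh_dist_vec z B
  rw [h, form_lin, form_lin', form_lin', form_self, form_self, form_comm (vec B), ← hc] at hz
  rw [h, form_lin', form_self, ← hc] at ha
  rw [h, form_lin, form_self, ← hc] at hb
  have hsc : 0 ≤ Real.sinh (dist A B) := Real.sinh_nonneg_iff.mpr dist_nonneg
  have sa : Real.sinh (dist A z) = β * Real.sinh (dist A B) := by
    have h0 : 0 ≤ Real.sinh (dist A z) := Real.sinh_nonneg_iff.mpr dist_nonneg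
    refine (sq_eq_sq₀ h0 (mul_nonneg hβ hsc)).mp ?_
    rw [mul_pow, Real.sinh_sq, Real.sinh_sq, ha]; linarith
  have sb : Real.sinh (dist z B) = α * Real.sinh (dist A B) := by
    have h0 : 0 ≤ Real.sinh (dist z B) := Real.sinh_nonneg_iff.mpr dist_nonneg
    refine (sq_eq_sq₀ h0 (mul_nonneg hα hsc)).mp ?_
    rw [mul_pow, Real.sinh_sq, Real.sinh_sq, hb]; linarith
  have key : Real.cosh (dist A z + dist z B) = Real.cosh (dist A B) := by
    rw [Real.cosh_add, sa, sb, ha, hb]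
    have := Real.sinh_sq (dist A B)
    linear_combination Real.cosh (dist A B) * hz + α * β * this
  have := Real.cosh_strictMonoOn.injOn (x₁ := dist A z + dist z B) (x₂ := dist A B)
    (by simp only [Set.mem_Ici]; positivity) (by simp only [Set.mem_Ici]; positivity) key
  exact this

theorem exists_on_seg (A B : UpperHalfPlane) {α β : ℝ} (hα : 0 < α) (hβ : 0 < β) :
    ∃ z ∈ GSeg A B, ∃ k : ℝ, 0 < k ∧ vec z = k • (α • vec A + β • vec B) := by
  set q : ℝ := α ^ 2 + β ^ 2 + 2 * α * β * Real.cosh (dist A B) with hq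
  have hqpos : 0 < q := by have := Real.cosh_pos (dist A B); positivity
  have hs : Real.sqrt q ^ 2 = q := Real.sq_sqrt hqpos.le
  have hs0 : 0 < Real.sqrt q := Real.sqrt_pos.mpr hqpos
  have hA := vec_unit A
  have hB := vec_unit B
  have hAp := vec_snd_pos A
  have hBp := vec_snd_pos B
  obtain ⟨z, hz⟩ := exists_vec ((Real.sqrt q)⁻¹ • (α • vec A + β • vec B))
    (by
      simp only [Prod.fst_add, Prod.snd_add, Prod.smul_fst, Prod.smul_snd, smul_eq_mul]
      positivity)
    (by
      rw [cosh_dist_vec] at hq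
      simp only [Prod.fst_add, Prod.snd_add, Prod.smul_fst, Prod.smul_snd, smul_eq_mul, dt, du]
        at hq ⊢
      field_simp
      rw [hs, hq]
      linear_combination α ^ 2 * hA + β ^ 2 * hB)
  refine ⟨z, ?_, (Real.sqrt q)⁻¹, by positivity, hz⟩
  refine mem_gseg (α := (Real.sqrt q)⁻¹ * α) (β := (Real.sqrt q)⁻¹ * β)
    (by positivity) (by positivity) ?_
  rw [hz, smul_add, smul_smul, smul_smul]

theorem of_mem_gseg {A B z : UpperHalfPlane} (h : z ∈ GSeg A B) :
    ∃ α β : ℝ, 0 ≤ α ∧ 0 ≤ β ∧ vec z = α • vec A + β • vec B := by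
  have h' : dist A z + dist z B = dist A B := h
  rcases eq_or_lt_of_le (dist_nonneg (x := A) (y := B)) with h0 | h0
  · have h1 : dist A z = 0 := by
      have := dist_nonneg (x := A) (y := z)
      have := dist_nonneg (x := z) (y := B)
      linarith
    rw [dist_eq_zero] at h1
    exact ⟨1, 0, by norm_num, by norm_num, by simp [h1]⟩
  · have hc := cosh_dist_vec A B
    have ha := cosh_dist_vec A z
    have hb := cosh_dist_vec z B
    have hS : 0 < Real.sinh (dist A B) := Real.sinh_pos_iff.mpr h0
    have hsa : 0 ≤ Real.sinh (dist A z) := Real.sinh_nonneg_iff.mpr dist_nonneg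
    have hsb : 0 ≤ Real.sinh (dist z B) := Real.sinh_nonneg_iff.mpr dist_nonneg
    have hadd := Real.sinh_add (dist A z) (dist z B)
    have hcadd := Real.cosh_add (dist A z) (dist z B)
    have q1 := Real.sinh_sq (dist A z)
    have q2 := Real.sinh_sq (dist z B)
    rw [h'] at hadd hcadd
    set S := Real.sinh (dist A B)
    set sa := Real.sinh (dist A z)
    set sb := Real.sinh (dist z B)
    set C := Real.cosh (dist A B)
    set ca := Real.cosh (dist A z)
    set cb := Real.cosh (dist z B)
    have hA := vec_unit A
    have hB := vec_unit B
    have hAp := vec_snd_pos A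
    have hBp := vec_snd_pos B
    obtain ⟨w, hw⟩ := exists_vec ((sb / S) • vec A + (sa / S) • vec B)
      (by
        simp only [Prod.fst_add, Prod.snd_add, Prod.smul_fst, Prod.smul_snd, smul_eq_mul]
        have hnn : 0 ≤ sb / S * (vec A).2.1 := by positivity
        have hnn2 : 0 ≤ sa / S * (vec B).2.1 := by positivity
        rcases eq_or_lt_of_le hsa with h3 | h3
        · rcases eq_or_lt_of_le hsb with h4 | h4
          · rw [← h3, ← h4] at hadd; simp at hadd; linarith
          · have : 0 < sb / S * (vec A).2.1 := by positivity
            linarith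
        · have : 0 < sa / S * (vec B).2.1 := by positivity
          linarith)
      (by
        have h5 : (sb ^ 2 + sa ^ 2 + 2 * sa * sb * C) = S ^ 2 := by
          rw [hadd, hcadd]
          linear_combination sb ^ 2 * q1 + sa ^ 2 * q2
        simp only [Prod.fst_add, Prod.snd_add, Prod.smul_fst, Prod.smul_snd, smul_eq_mul, dt, du]
          at hc ⊢
        field_simp
        rw [hc] at h5
        linear_combination sb ^ 2 * hA + sa ^ 2 * hB + h5)
    have : z = w := by
      apply eq_of_form
      rw [hw, form_lin', form_comm, ← ha, ← hb]
      field_simp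
      rw [hadd]; ring
    exact ⟨sb / S, sa / S, by positivity, by positivity, by rw [this, hw]⟩

theorem rel4 (a b c d : E) :
    det a b d • c + (-det a b c) • d = (-det b c d) • a + det a c d • b := by
  refine Prod.ext ?_ (Prod.ext ?_ ?_) <;>
  simp only [det, Prod.fst_add, Prod.snd_add, Prod.smul_fst, Prod.smul_snd, smul_eq_mul] <;> ring

theorem cross_aux (A B C D : UpperHalfPlane)
    (h1 : 0 < det (vec A) (vec B) (vec D)) (h2 : det (vec A) (vec B) (vec C) < 0) :
    (∃ z, z ∈ GSeg A B ∧ z ∈ GSeg C D) ∨ (∃ z ∈ GSeg C D, A ∈ GSeg z B) ∨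
      (∃ z ∈ GSeg C D, B ∈ GSeg z A) := by
  have rel := rel4 (vec A) (vec B) (vec C) (vec D)
  set γ := det (vec A) (vec B) (vec D)
  set δ := -det (vec A) (vec B) (vec C) with hδ
  have hδ' : 0 < δ := by linarith
  set α := -det (vec B) (vec C) (vec D)
  set β := det (vec A) (vec C) (vec D)
  obtain ⟨z, hz, k, hk, hzv⟩ := exists_on_seg C D h1 hδ'
  rw [rel] at hzv
  have pz := vec_snd_pos z
  have pA := vec_snd_pos A
  have pB := vec_snd_pos B
  have contra : α ≤ 0 → β ≤ 0 → False := by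
    intro ha hb
    rw [hzv] at pz
    simp only [Prod.fst_add, Prod.snd_add, Prod.smul_fst, Prod.smul_snd, smul_eq_mul] at pz
    have : α * (vec A).2.1 + β * (vec B).2.1 ≤ 0 := by nlinarith
    nlinarith
  rcases le_or_gt 0 α with ha | ha
  · rcases le_or_gt 0 β with hb | hb
    · left
      refine ⟨z, mem_gseg (α := k * α) (β := k * β) (by positivity) (by positivity) ?_, hz⟩
      rw [hzv, smul_add, smul_smul, smul_smul]
    · right; left
      have ha' : 0 < α := by
        rcases eq_or_lt_of_le ha with h | h
        · exact (contra h.symm.le hb.le).elim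
        · exact h
      refine ⟨z, hz, mem_gseg (α := 1 / (k * α)) (β := (-β) / α) (by positivity)
        (div_nonneg (by linarith) ha) ?_⟩
      rw [hzv]
      refine Prod.ext ?_ (Prod.ext ?_ ?_) <;>
      simp only [Prod.fst_add, Prod.snd_add, Prod.smul_fst, Prod.smul_snd, smul_eq_mul] <;>
      field_simp <;> ring
  · right; right
    have hb : 0 < β := by
      by_contra hb
      exact contra ha.le (not_lt.mp hb)
    refine ⟨z, hz, mem_gseg (α := 1 / (k * β)) (β := (-α) / β) (by positivity)
        (div_nonneg (by linarith) hb.le) ?_⟩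
    rw [hzv]
    refine Prod.ext ?_ (Prod.ext ?_ ?_) <;>
    simp only [Prod.fst_add, Prod.snd_add, Prod.smul_fst, Prod.smul_snd, smul_eq_mul] <;>
    field_simp <;> ring

theorem gseg_comm (A B : UpperHalfPlane) : GSeg A B = GSeg B A := by
  ext z
  simp only [GSeg, Set.mem_ofPred_eq]
  rw [dist_comm A z, dist_comm z B, dist_comm A B, add_comm]

theorem cross_main (A B C D : UpperHalfPlane)
    (h : det (vec A) (vec B) (vec C) * det (vec A) (vec B) (vec D) < 0) :
    (∃ z, z ∈ GSeg A B ∧ z ∈ GSeg C D) ∨ (∃ z ∈ GSeg C D, A ∈ GSeg z B) ∨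
      (∃ z ∈ GSeg C D, B ∈ GSeg z A) := by
  rcases mul_neg_iff.mp h with ⟨h1, h2⟩ | ⟨h1, h2⟩
  · have := cross_aux A B D C h1 h2
    rwa [gseg_comm D C] at this
  · exact cross_aux A B C D h2 h1

theorem hull_aux {S : Set UpperHalfPlane} {A B C D z : UpperHalfPlane} (hB : B ∈ S) (hC : C ∈ S)
    (hD : D ∈ S) (hz : z ∈ GSeg C D) (hA : A ∈ GSeg z B) : A ∈ HConvexHull S := by
  rintro T ⟨hT, hS⟩
  exact hT z (hT C (hS hC) D (hS hD) hz) B (hS hB) hA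

/-- a linear relation with one strict sign against two weak ones -/
theorem col_aux {A B C : UpperHalfPlane} {x y z : ℝ} (hx : 0 < x) (hy : y ≤ 0) (hz : z ≤ 0)
    (h : x • vec A + y • vec B + z • vec C = 0) : A ∈ GSeg B C := by
  refine mem_gseg (α := -y / x) (β := -z / x) (div_nonneg (by linarith) hx.le)
    (div_nonneg (by linarith) hx.le) ?_
  have e1 := congrArg (fun v : E => v.1) h
  have e2 := congrArg (fun v : E => v.2.1) h
  have e3 := congrArg (fun v : E => v.2.2) h
  simp only [Prod.fst_add, Prod.snd_add, Prod.smul_fst, Prod.smul_snd, smul_eq_mul, Prod.fst_zero,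
    Prod.snd_zero] at e1 e2 e3
  refine Prod.ext ?_ (Prod.ext ?_ ?_) <;>
    simp only [Prod.fst_add, Prod.snd_add, Prod.smul_fst, Prod.smul_snd, smul_eq_mul] <;>
    field_simp <;> linarith

theorem rel_nonneg {A B C : UpperHalfPlane} {x y z : ℝ} (hx : 0 ≤ x) (hy : 0 ≤ y) (hz : 0 ≤ z)
    (h : x • vec A + y • vec B + z • vec C = 0) : x = 0 ∧ y = 0 ∧ z = 0 := by
  have e2 := congrArg (fun v : E => v.2.1) h
  simp only [Prod.fst_add, Prod.snd_add, Prod.smul_fst, Prod.smul_snd, smul_eq_mul, Prod.fst_zero,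
    Prod.snd_zero] at e2
  have pA := vec_snd_pos A
  have pB := vec_snd_pos B
  have pC := vec_snd_pos C
  have h1 : 0 ≤ x * (vec A).2.1 := by positivity
  have h2 : 0 ≤ y * (vec B).2.1 := by positivity
  have h3 : 0 ≤ z * (vec C).2.1 := by positivity
  refine ⟨?_, ?_, ?_⟩
  · have : x * (vec A).2.1 = 0 := by linarith
    exact (mul_eq_zero.mp this).resolve_right pA.ne'
  · have : y * (vec B).2.1 = 0 := by linarith
    exact (mul_eq_zero.mp this).resolve_right pB.ne'
  · have : z * (vec C).2.1 = 0 := by linarith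
    exact (mul_eq_zero.mp this).resolve_right pC.ne'

theorem collinear_of_rel {A B C : UpperHalfPlane} {x y z : ℝ}
    (h : x • vec A + y • vec B + z • vec C = 0) (h0 : ¬ (x = 0 ∧ y = 0 ∧ z = 0)) :
    HCollinear A B C := by
  have hB : y • vec B + x • vec A + z • vec C = 0 := by rw [← h]; abel
  have hC : z • vec C + x • vec A + y • vec B = 0 := by rw [← h]; abel
  have h' : (-x) • vec A + (-y) • vec B + (-z) • vec C = 0 := by
    have : (-x) • vec A + (-y) • vec B + (-z) • vec C
      = -(x • vec A + y • vec B + z • vec C) := by module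
    rw [this, h, neg_zero]
  have hB' : (-y) • vec B + (-x) • vec A + (-z) • vec C = 0 := by rw [← h']; abel
  have hC' : (-z) • vec C + (-x) • vec A + (-y) • vec B = 0 := by rw [← h']; abel
  unfold HCollinear
  rcases le_or_gt x 0 with hx | hx <;> rcases le_or_gt y 0 with hy | hy <;>
    rcases le_or_gt z 0 with hz | hz
  · exfalso
    have := rel_nonneg (by linarith) (by linarith) (by linarith) h'
    simp only [neg_eq_zero] at this
    exact h0 this
  · exact Or.inr (Or.inr (col_aux hz hx hy hC))
  · exact Or.inr (Or.inl (col_aux hy hx hz hB))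
  · rcases eq_or_lt_of_le hx with h1 | h1
    · exfalso; exact h0 (rel_nonneg h1.symm.le hy.le hz.le h)
    · exact Or.inl (col_aux (by linarith) (by linarith) (by linarith) h')
  · exact Or.inl (col_aux hx hy hz h)
  · rcases eq_or_lt_of_le hy with h1 | h1
    · exfalso; exact h0 (rel_nonneg hx.le h1.symm.le hz.le h)
    · exact Or.inr (Or.inl (col_aux (by linarith) (by linarith) (by linarith) hB'))
  · rcases eq_or_lt_of_le hz with h1 | h1
    · exfalso; exact h0 (rel_nonneg hx.le hy.le h1.symm.le h)
    · exact Or.inr (Or.inr (col_aux (by linarith) (by linarith) (by linarith) hC'))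
  · exfalso; exact h0 (rel_nonneg hx.le hy.le hz.le h)

theorem det_ne_zero {A B C : UpperHalfPlane} (h : ¬ HCollinear A B C) :
    det (vec A) (vec B) (vec C) ≠ 0 := by
  intro h0
  apply h
  let M : Matrix (Fin 3) (Fin 3) ℝ :=
    !![(vec A).1, (vec A).2.1, (vec A).2.2; (vec B).1, (vec B).2.1, (vec B).2.2;
      (vec C).1, (vec C).2.1, (vec C).2.2]
  have hM : M.det = 0 := by
    rw [← h0, Matrix.det_fin_three]
    simp only [M, det]
    simp
    ring
  obtain ⟨v, hv, hvM⟩ := Matrix.exists_vecMul_eq_zero_iff.mpr hM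
  refine collinear_of_rel (x := v 0) (y := v 1) (z := v 2) ?_ ?_
  · have e0 := congrFun hvM 0
    have e1 := congrFun hvM 1
    have e2 := congrFun hvM 2
    simp [M, Matrix.vecMul, dotProduct, Fin.sum_univ_three] at e0 e1 e2
    refine Prod.ext ?_ (Prod.ext ?_ ?_) <;> simpa
  · rintro ⟨h1, h2, h3⟩
    apply hv
    ext i
    fin_cases i <;> simpa

/-! Combinatorics -/

theorem one_ext {n : ℕ} [NeZero n] (h : ZMod n → ℝ) (hne : ∀ i, h i ≠ h (i + 1))
    (hc : ¬ 2 ≤ Set.ncard {i : ZMod n | h (i - 1) < h i ∧ h (i + 1) < h i}) :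
    ∃ (c : ZMod n) (k : ℕ), 0 < k ∧ k < n ∧
      (∀ t : ℕ, t < k → h (c + t + 1) < h (c + t)) ∧
      (∀ t : ℕ, k ≤ t → t < n → h (c + t) < h (c + t + 1)) := by
  obtain ⟨c, hcmax⟩ := Finite.exists_max h
  have hn0 : 0 < n := Nat.pos_of_ne_zero (NeZero.ne n)
  have hcl : c ∈ {i : ZMod n | h (i - 1) < h i ∧ h (i + 1) < h i} := by
    refine ⟨lt_of_le_of_ne (hcmax _) ?_, lt_of_le_of_ne (hcmax _) (hne c).symm⟩
    have := hne (c - 1)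
    rwa [sub_add_cancel] at this
  have huniq : ∀ i ∈ {i : ZMod n | h (i - 1) < h i ∧ h (i + 1) < h i}, i = c := by
    intro i hi
    have h1 : Set.ncard {i : ZMod n | h (i - 1) < h i ∧ h (i + 1) < h i} ≤ 1 := by omega
    exact (Set.ncard_le_one (Set.toFinite _)).mp h1 i hi c hcl
  have hlast : ((n - 1 : ℕ) : ZMod n) = -1 := by
    rw [Nat.cast_sub hn0]; simp
  have hex : ∃ t : ℕ, h (c + t) < h (c + t + 1) := by
    refine ⟨n - 1, ?_⟩
    rw [hlast, ← sub_eq_add_neg, sub_add_cancel]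
    exact hcl.1
  classical
  refine ⟨c, Nat.find hex, ?_, ?_, ?_, ?_⟩
  · rw [Nat.find_pos]
    have := hcl.2
    simp only [Nat.cast_zero, add_zero]
    exact not_lt.mpr this.le
  · have : Nat.find hex ≤ n - 1 := by
      apply Nat.find_min'
      rw [hlast, ← sub_eq_add_neg, sub_add_cancel]
      exact hcl.1
    omega
  · intro t ht
    have := Nat.find_min hex ht
    exact lt_of_le_of_ne (not_lt.mp this) (hne _).symm
  · intro t ht
    induction t, ht using Nat.le_induction with
    | base => intro _; exact Nat.find_spec hex
    | succ t ht ih =>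
      intro htn
      have h1 := ih (by omega)
      by_contra h2
      have h3 : h (c + (t + 1 : ℕ) + 1) < h (c + (t + 1 : ℕ)) :=
        lt_of_le_of_ne (not_lt.mp h2) (hne _).symm
      have h4 : c + ((t + 1 : ℕ) : ZMod n) = c := by
        apply huniq
        refine ⟨?_, h3⟩
        have : c + ((t + 1 : ℕ) : ZMod n) - 1 = c + t := by push_cast; ring
        rw [this]
        push_cast
        rw [← add_assoc]
        exact h1
      have h5 : ((t + 1 : ℕ) : ZMod n) = 0 := by simpa using h4
      rw [ZMod.natCast_eq_zero_iff] at h5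
      exact absurd (Nat.le_of_dvd (by omega) h5) (by omega)

/-- distinctness of residues -/
theorem cast_ne {n : ℕ} {s t : ℕ} (hs : s < n) (ht : t < n) (h : s ≠ t) :
    (s : ZMod n) ≠ (t : ZMod n) := by
  intro h'
  rw [ZMod.natCast_eq_natCast_iff', Nat.mod_eq_of_lt hs, Nat.mod_eq_of_lt ht] at h'
  exact h h'

/-! Convex position core -/

theorem det_cyc (u v w : E) : det u v w = det v w u := by simp only [det]; ring

theorem total_pos {n : ℕ} (W : ℕ → E)
    (h : ∀ t s, t + 1 < n → s < n → s ≠ t → s ≠ t + 1 → 0 < det (W t) (W (t + 1)) (W s)) :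
    ∀ i j k, i < j → j < k → k < n → 0 < det (W i) (W j) (W k) := by
  intro i j k hij hjk hk
  rcases Nat.eq_or_lt_of_le (Nat.succ_le_of_lt hij) with h1 | h1
  · rw [← h1]
    exact h i k (by omega) hk (by omega) (by omega)
  · have hj1 : 0 < det (W i) (W (i + 1)) (W j) :=
      h i j (by omega) (by omega) (by omega) (by omega)
    have base : ∀ l, i < l → l + 1 < n → 0 < det (W i) (W l) (W (l + 1)) := by
      intro l hl hl1
      rw [det_cyc]
      exact h l i hl1 (by omega) (by omega) (by omega)
    revert hk
    induction k, hjk using Nat.le_induction with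
    | base => intro hk; exact base j hij hk
    | succ k hk' ih =>
      intro hk
      have e1 := ih (by omega)
      have hjk' : j < k := hk'
      have e2 := base k (by omega) hk
      have e3 : 0 < det (W i) (W (i + 1)) (W k) :=
        h i k (by omega) (by omega) (by omega) (by omega)
      have e4 : 0 < det (W i) (W (i + 1)) (W (k + 1)) :=
        h i (k + 1) (by omega) (by omega) (by omega) (by omega)
      have id : det (W i) (W (i + 1)) (W k) * det (W i) (W j) (W (k + 1))
          = det (W i) (W (i + 1)) (W j) * det (W i) (W k) (W (k + 1))
          + det (W i) (W (i + 1)) (W (k + 1)) * det (W i) (W j) (W k) := by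
        simp only [det]; ring
      have : 0 < det (W i) (W (i + 1)) (W k) * det (W i) (W j) (W (k + 1)) := by
        rw [id]; positivity
      exact (pos_iff_pos_of_mul_pos this).mp e3

theorem det_self_left (u v : E) : det u u v = 0 := by simp only [det]; ring
theorem det_self_mid (u v : E) : det v u u = 0 := by simp only [det]; ring
theorem det_self_out (u v : E) : det u v u = 0 := by simp only [det]; ring

theorem dual_pos {n : ℕ} (W : ℕ → E) (hper : W n = W 0)
    (h : ∀ i j k, i < j → j < k → k < n → 0 < det (W i) (W j) (W k))
    (i j : ℕ) (hi : 0 < i) (hij : i < j) (hj : j < n) :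
    0 < det (cr (W 0) (W 1)) (cr (W i) (W (i + 1))) (cr (W j) (W (j + 1))) := by
  have hnn : ∀ i j k, i ≤ j → j ≤ k → k < n → 0 ≤ det (W i) (W j) (W k) := by
    intro i j k h1 h2 h3
    rcases Nat.eq_or_lt_of_le h1 with h4 | h4
    · rw [h4, det_self_left]
    · rcases Nat.eq_or_lt_of_le h2 with h5 | h5
      · rw [h5, det_self_mid]
      · exact (h _ _ _ h4 h5 h3).le
  have e : det (cr (W 0) (W 1)) (cr (W i) (W (i + 1))) (cr (W j) (W (j + 1)))
      = det (W 0) (W i) (W (i + 1)) * det (W 1) (W j) (W (j + 1))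
        - det (W 1) (W i) (W (i + 1)) * det (W 0) (W j) (W (j + 1)) := by
    simp only [det, cr]; ring
  rw [e]
  rcases Nat.eq_or_lt_of_le (Nat.succ_le_of_lt hj) with h1 | h1
  · have h1' : j + 1 = n := h1
    rw [h1', hper, det_self_out, mul_zero, sub_zero, ← det_cyc (W 0) (W 1) (W j)]
    exact mul_pos (h 0 i (i + 1) hi (by omega) (by omega)) (h 0 1 j (by omega) (by omega) hj)
  · have h1' : j + 1 < n := h1
    have id : (det (W 0) (W i) (W (i + 1)) * det (W 1) (W j) (W (j + 1))
        - det (W 1) (W i) (W (i + 1)) * det (W 0) (W j) (W (j + 1)))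
          * det (W 0) (W i) (W (j + 1))
        = det (W 0) (W i) (W (i + 1)) * det (W 0) (W 1) (W (j + 1)) * det (W i) (W j) (W (j + 1))
        + det (W 0) (W j) (W (j + 1)) * det (W 0) (W 1) (W i) * det (W i) (W (i + 1)) (W (j + 1))
        := by
      simp only [det]; ring
    have p : 0 < det (W 0) (W i) (W (j + 1)) := h _ _ _ hi (by omega) h1'
    refine pos_of_mul_pos_left ?_ p.le
    rw [id]
    have a1 := h 0 i (i + 1) hi (by omega) (by omega)
    have a2 := h 0 1 (j + 1) (by omega) (by omega) h1'
    have a3 := h i j (j + 1) hij (by omega) h1'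
    have b1 := hnn 0 j (j + 1) (by omega) (by omega) h1'
    have b2 := hnn 0 1 i (by omega) (by omega) (by omega)
    have b3 := hnn i (i + 1) (j + 1) (by omega) (by omega) h1'
    positivity

theorem core_contra {n : ℕ} [NeZero n] (hn : 4 ≤ n) (v : ZMod n → E)
    (hpos : ∀ i j, j ≠ i → j ≠ i + 1 → 0 < det (v i) (v (i + 1)) (v j))
    (M : ZMod n → E) (l : ZMod n → ℝ)
    (hM : ∀ i, M (i + 1) - M i = l i • cr (v i) (v (i + 1)))
    (c : ZMod n) (k : ℕ) (hk : 0 < k) (hkn : k < n)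
    (h1 : ∀ t : ℕ, t < k → 0 < l (c + t))
    (h2 : ∀ t : ℕ, k ≤ t → t < n → l (c + t) < 0) : False := by
  set W : ℕ → E := fun t => v (c + t) with hW
  have hWn : W n = W 0 := by simp [hW]
  have hWs : ∀ t : ℕ, W (t + 1) = v (c + t + 1) := by
    intro t; simp only [hW]; congr 1; push_cast; ring
  have tp : ∀ i j k, i < j → j < k → k < n → 0 < det (W i) (W j) (W k) := by
    apply total_pos
    intro t s ht hs hst hst'
    rw [hWs]
    apply hpos
    · intro h
      exact cast_ne hs (by omega) hst (add_left_cancel h)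
    · intro h
      rw [add_assoc] at h
      have := add_left_cancel h
      refine cast_ne hs ht hst' ?_
      rw [this]; push_cast; rfl
  have dp := dual_pos W hWn tp
  set N : ℕ → E := fun t => cr (W t) (W (t + 1)) with hN
  set f : E → ℝ := fun x => det (N 0) (N k) x with hf
  have fsub : ∀ x y, f (x - y) = f x - f y := by
    intro x y; simp only [hf, det, Prod.fst_sub, Prod.snd_sub]; ring
  have fsmul : ∀ (a : ℝ) x, f (a • x) = a * f x := by
    intro a x; simp only [hf, det, Prod.smul_fst, Prod.smul_snd, smul_eq_mul]; ring
  have hterm : ∀ t : ℕ, l (c + t) * f (N t) = f (M (c + (t + 1 : ℕ))) - f (M (c + t)) := by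
    intro t
    have := hM (c + t)
    rw [← fsub, ← fsmul]
    congr 1
    simp only [hN]
    rw [hWs]
    push_cast
    rw [← add_assoc, this]
  have hsum : ∑ t ∈ Finset.range n, l (c + t) * f (N t) = 0 := by
    rw [Finset.sum_congr rfl (fun t _ => hterm t),
      Finset.sum_range_sub (fun t : ℕ => f (M (c + t)))]
    simp
  have hneg : ∀ t, t < n → t ≠ 0 → t ≠ k → l (c + t) * f (N t) < 0 := by
    intro t ht ht0 htk
    rcases lt_or_gt_of_ne htk with h | h
    · have := dp t k (by omega) h hkn
      have hfneg : f (N t) < 0 := by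
        have e : f (N t) = - det (N 0) (N t) (N k) := by simp only [hf, det]; ring
        rw [e]; simp only [hN]; linarith
      exact mul_neg_of_pos_of_neg (h1 t h) hfneg
    · have := dp k t hk h ht
      exact mul_neg_of_neg_of_pos (h2 t h.le ht) this
  have hle : ∀ t ∈ Finset.range n, l (c + t) * f (N t) ≤ 0 := by
    intro t ht
    rw [Finset.mem_range] at ht
    by_cases h0 : t = 0
    · subst h0; simp only [hf]; rw [det_self_out]; simp
    · by_cases hk' : t = k
      · subst hk'; simp only [hf]; rw [det_self_mid]; simp
      · exact (hneg t ht h0 hk').le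
  have hlt : ∑ t ∈ Finset.range n, l (c + t) * f (N t) < ∑ t ∈ Finset.range n, (0 : ℝ) := by
    apply Finset.sum_lt_sum hle
    by_cases hk1 : k = 1
    · exact ⟨2, Finset.mem_range.mpr (by omega), hneg 2 (by omega) (by omega) (by omega)⟩
    · exact ⟨1, Finset.mem_range.mpr (by omega), hneg 1 (by omega) (by omega) (by omega)⟩
  rw [hsum] at hlt
  simp at hlt

theorem cramer (m u v w : E) : det u v w • m =
    dt m u • cr v w + dt m v • cr w u + dt m w • cr u v := by
  refine Prod.ext ?_ (Prod.ext ?_ ?_) <;>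
  simp only [det, dt, cr, Prod.fst_add, Prod.snd_add, Prod.smul_fst, Prod.smul_snd,
    smul_eq_mul] <;> ring

theorem exists_coef {m u v w : E} (h : det u v w ≠ 0) (h1 : dt m u = 0) (h2 : dt m v = 0) :
    ∃ l : ℝ, m = l • cr u v := by
  refine ⟨dt m w / det u v w, ?_⟩
  have := cramer m u v w
  rw [h1, h2, zero_smul, zero_smul, zero_add, zero_add] at this
  rw [div_eq_inv_mul, mul_smul, ← this, smul_smul, inv_mul_cancel₀ h, one_smul]

theorem orth_zero {v x : E} (hv1 : 0 < v.1) (hv2 : 0 < v.2.1) (hv : v.1 * v.2.1 - v.2.2 ^ 2 = 1)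
    (h1 : dt (du x) v = 0) (h2 : dt (du x) x = 0) : x = 0 := by
  obtain ⟨a, b, c⟩ := x
  obtain ⟨A, B, C⟩ := v
  simp only [dt, du] at *
  have e : (a * B - c * C) ^ 2 + c ^ 2 = 0 := by
    linear_combination (-c ^ 2) * hv + 2 * a * B * h1 - A * B * h2
  have hc : c = 0 := by nlinarith [sq_nonneg (a * B - c * C), sq_nonneg c]
  subst hc
  have ha : a = 0 := by
    have : a * B = 0 := by nlinarith
    exact (mul_eq_zero.mp this).resolve_right hv2.ne'
  subst ha
  have hb : b = 0 := by
    have : b * A = 0 := by linarith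
    exact (mul_eq_zero.mp this).resolve_right hv1.ne'
  subst hb
  rfl

/-- The algebraic core. -/
theorem core {n : ℕ} [NeZero n] (hn : 4 ≤ n) (v P : ZMod n → E) (R : ZMod n → ℝ)
    (hv1 : ∀ i, 0 < (v i).1) (hv2 : ∀ i, 0 < (v i).2.1)
    (hv : ∀ i, (v i).1 * (v i).2.1 - (v i).2.2 ^ 2 = 1)
    (hpos : ∀ i j, j ≠ i → j ≠ i + 1 → 0 < det (v i) (v (i + 1)) (v j))
    (hP0 : ∀ i, dt (du (P i)) (v (i - 1)) = 1)
    (hP1 : ∀ i, dt (du (P i)) (v i) = 1)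
    (hP2 : ∀ i, dt (du (P i)) (v (i + 1)) = 1)
    (hPne : ∀ i, P (i + 1) ≠ P i)
    (hs1 : ∀ i, 0 ≤ det (v i) (v (i + 1)) (P i))
    (hs2 : ∀ i, 0 ≤ det (v i) (v (i + 1)) (P (i + 1)))
    (hR : ∀ i j, dt (du (P i)) (P i) < dt (du (P j)) (P j) ↔ R j < R i) :
    2 ≤ Set.ncard {i : ZMod n | R (i - 1) < R i ∧ R (i + 1) < R i} ∧
    2 ≤ Set.ncard {i : ZMod n | R i < R (i - 1) ∧ R i < R (i + 1)} := by
  have hne2 : ∀ i : ZMod n, i + 2 ≠ i ∧ i + 2 ≠ i + 1 := by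
    intro i
    constructor
    · intro h
      have : (2 : ZMod n) = 0 := by simpa using h
      exact cast_ne (n := n) (s := 2) (t := 0) (by omega) (by omega) (by omega)
        (by push_cast; exact this)
    · intro h
      have := add_left_cancel h
      exact cast_ne (n := n) (s := 2) (t := 1) (by omega) (by omega) (by omega)
        (by push_cast; exact this)
  have hdu : ∀ i x, dt (du (P (i + 1)) - du (P i)) x
      = dt (du (P (i + 1))) x - dt (du (P i)) x := by
    intro i x; simp only [dt, Prod.fst_sub, Prod.snd_sub]; ring
  have hl : ∀ i, ∃ l : ℝ, du (P (i + 1)) - du (P i) = l • cr (v i) (v (i + 1)) := by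
    intro i
    refine exists_coef (hpos i (i + 2) (hne2 i).1 (hne2 i).2).ne' ?_ ?_
    · rw [hdu, hP1]
      have := hP0 (i + 1)
      rw [add_sub_cancel_right] at this
      rw [this, sub_self]
    · rw [hdu, hP1, hP2, sub_self]
  choose l hl using hl
  have hq : ∀ i, dt (du (P (i + 1))) (P (i + 1)) - dt (du (P i)) (P i)
      = l i * (det (v i) (v (i + 1)) (P i) + det (v i) (v (i + 1)) (P (i + 1))) := by
    intro i
    have e : dt (du (P (i + 1))) (P (i + 1)) - dt (du (P i)) (P i)
        = dt (du (P (i + 1)) - du (P i)) (P i + P (i + 1)) := by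
      simp only [dt, du, Prod.fst_sub, Prod.snd_sub, Prod.fst_add, Prod.snd_add]; ring
    rw [e, hl]
    simp only [dt, cr, det, Prod.smul_fst, Prod.smul_snd, smul_eq_mul, Prod.fst_add, Prod.snd_add]
    ring
  have hspos : ∀ i, 0 < det (v i) (v (i + 1)) (P i) + det (v i) (v (i + 1)) (P (i + 1)) := by
    intro i
    rcases eq_or_lt_of_le (add_nonneg (hs1 i) (hs2 i)) with h | h
    · exfalso
      have ha : det (v i) (v (i + 1)) (P i) = 0 := by linarith [hs1 i, hs2 i]
      have hb : det (v i) (v (i + 1)) (P (i + 1)) = 0 := by linarith [hs1 i, hs2 i]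
      apply hPne i
      rw [← sub_eq_zero]
      have ed : du (P (i + 1) - P i) = du (P (i + 1)) - du (P i) := by
        refine Prod.ext ?_ (Prod.ext ?_ ?_) <;>
        simp only [du, Prod.fst_sub, Prod.snd_sub] <;> ring
      refine orth_zero (hv1 i) (hv2 i) (hv i) ?_ ?_
      · rw [ed, hdu, hP1]
        have := hP0 (i + 1)
        rw [add_sub_cancel_right] at this
        rw [this, sub_self]
      · rw [ed, hl]
        have : dt (l i • cr (v i) (v (i + 1))) (P (i + 1) - P i)
          = l i * (det (v i) (v (i + 1)) (P (i + 1)) - det (v i) (v (i + 1)) (P i)) := by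
          simp only [dt, cr, det, Prod.smul_fst, Prod.smul_snd, smul_eq_mul, Prod.fst_sub,
            Prod.snd_sub]
          ring
        rw [this, ha, hb]; simp
    · exact h
  have hl0 : ∀ i, l i ≠ 0 := by
    intro i h
    apply hPne i
    have := hl i
    rw [h, zero_smul, sub_eq_zero] at this
    simp only [du, Prod.mk.injEq] at this
    refine Prod.ext ?_ (Prod.ext ?_ ?_) <;> linarith [this.1, this.2.1, this.2.2]
  have hlpos : ∀ i, 0 < l i ↔ R (i + 1) < R i := by
    intro i
    rw [← hR, ← mul_pos_iff_of_pos_right (hspos i), ← hq, sub_pos]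
  have hlneg : ∀ i, l i < 0 ↔ R i < R (i + 1) := by
    intro i
    rw [← hR, ← sub_neg (a := dt (du (P (i + 1))) (P (i + 1))), hq]
    constructor
    · intro h; exact mul_neg_of_neg_of_pos h (hspos i)
    · intro h; by_contra hc; nlinarith [hspos i]
  have hRne : ∀ i, R i ≠ R (i + 1) := by
    intro i
    rcases lt_or_gt_of_ne (hl0 i) with h | h
    · exact ((hlneg i).mp h).ne
    · exact ((hlpos i).mp h).ne'
  constructor
  · by_contra hcon
    obtain ⟨c, k, hk, hkn, a1, a2⟩ := one_ext R hRne hcon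
    exact core_contra hn v hpos (fun i => du (P i)) l hl c k hk hkn
      (fun t ht => (hlpos _).mpr (a1 t ht)) (fun t ht ht' => (hlneg _).mpr (a2 t ht ht'))
  · by_contra hcon
    obtain ⟨c, k, hk, hkn, a1, a2⟩ := one_ext (fun i => - R i)
      (fun i h => hRne i (neg_injective h)) (by simpa only [neg_lt_neg_iff] using hcon)
    simp only [neg_lt_neg_iff] at a1 a2
    refine core_contra hn v hpos (fun i => - du (P i)) (fun i => - l i) ?_ c k hk hkn
      (fun t ht => ?_) (fun t ht ht' => ?_)
    · intro i
      rw [neg_smul, ← hl]; abel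
    · have := (hlneg _).mpr (a1 t ht); linarith
    · have := (hlpos _).mpr (a2 t ht ht'); linarith

theorem det_fl (u v w : E) : det (fl u) (fl v) (fl w) = - det u v w := by
  simp only [det, fl]; ring

theorem form_fl (u v : E) : dt (du (fl u)) (fl v) = dt (du u) v := by
  simp only [dt, du, fl]; ring

theorem cone_rep {V A B z : UpperHalfPlane} (hV : V ∉ GSeg A B) (h : z ∈ HCone V A B) :
    ∃ α β σ : ℝ, 0 ≤ α ∧ 0 ≤ β ∧ vec z = α • vec A + β • vec B + σ • vec V := by
  obtain ⟨w, hw, h | h⟩ := h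
  · obtain ⟨α, β, hα, hβ, e⟩ := of_mem_gseg hw
    obtain ⟨s, t, hs, ht, e'⟩ := of_mem_gseg h
    rcases eq_or_lt_of_le ht with h0 | h0
    · exfalso
      rw [← h0, zero_smul, add_zero] at e'
      have hwu := form_self w
      have hVu := form_self V
      have e0 : vec w = s • vec V + (0 : ℝ) • vec V := by rw [e']; simp
      rw [e0, form_lin, form_lin', hVu] at hwu
      have hs1 : s = 1 := by nlinarith
      rw [hs1, one_smul] at e'
      rw [vec_inj e'] at hw
      exact hV hw
    · refine ⟨α / t, β / t, - s / t, by positivity, by positivity, ?_⟩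
      rw [e] at e'
      have e1 : t • vec z = α • vec A + β • vec B - s • vec V := by
        rw [e']; abel
      have e2 : vec z = t⁻¹ • (t • vec z) := by
        rw [smul_smul, inv_mul_cancel₀ h0.ne', one_smul]
      rw [e2, e1]
      module
  · obtain ⟨α, β, hα, hβ, e⟩ := of_mem_gseg hw
    obtain ⟨s, t, hs, ht, e'⟩ := of_mem_gseg h
    refine ⟨t * α, t * β, s, by positivity, by positivity, ?_⟩
    rw [e', e]; module

theorem det_comb (u v a b c : E) (α β σ : ℝ) : det u v (α • a + β • b + σ • c)
    = α * det u v a + β * det u v b + σ * det u v c := by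
  simp only [det, Prod.fst_add, Prod.snd_add, Prod.smul_fst, Prod.smul_snd, smul_eq_mul]; ring

theorem det_smul_right (u v a : E) (α : ℝ) : det u v (α • a) = α * det u v a := by
  simp only [det, Prod.smul_fst, Prod.smul_snd, smul_eq_mul]; ring

theorem fl_inj {u v : E} (h : fl u = fl v) : u = v := by
  simp only [fl, Prod.mk.injEq, neg_inj] at h
  exact Prod.ext h.1 (Prod.ext h.2.1 h.2.2)

theorem core2 {n : ℕ} [NeZero n] (hn : 4 ≤ n) (v P : ZMod n → E) (R : ZMod n → ℝ) (e : ℝ)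
    (he : e ≠ 0)
    (hv1 : ∀ i, 0 < (v i).1) (hv2 : ∀ i, 0 < (v i).2.1)
    (hv : ∀ i, (v i).1 * (v i).2.1 - (v i).2.2 ^ 2 = 1)
    (hpos : ∀ i j, j ≠ i → j ≠ i + 1 → 0 < e * det (v i) (v (i + 1)) (v j))
    (hP0 : ∀ i, dt (du (P i)) (v (i - 1)) = 1)
    (hP1 : ∀ i, dt (du (P i)) (v i) = 1)
    (hP2 : ∀ i, dt (du (P i)) (v (i + 1)) = 1)
    (hPne : ∀ i, P (i + 1) ≠ P i)
    (hs1 : ∀ i, 0 ≤ e * det (v i) (v (i + 1)) (P i))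
    (hs2 : ∀ i, 0 ≤ e * det (v i) (v (i + 1)) (P (i + 1)))
    (hR : ∀ i j, dt (du (P i)) (P i) < dt (du (P j)) (P j) ↔ R j < R i) :
    2 ≤ Set.ncard {i : ZMod n | R (i - 1) < R i ∧ R (i + 1) < R i} ∧
    2 ≤ Set.ncard {i : ZMod n | R i < R (i - 1) ∧ R i < R (i + 1)} := by
  rcases lt_or_gt_of_ne he with h | h
  · refine core hn (fun i => fl (v i)) (fun i => fl (P i)) R hv1 hv2 ?_ ?_ ?_ ?_ ?_ ?_ ?_ ?_ ?_
    · intro i; simp only [fl, neg_sq]; exact hv i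
    · intro i j h1 h2
      rw [det_fl]
      have := (pos_iff_neg_of_mul_neg (a := e) (b := - det (v i) (v (i + 1)) (v j))
        (by linarith [hpos i j h1 h2]))
      by_contra hc
      nlinarith [hpos i j h1 h2]
    · intro i; rw [form_fl]; exact hP0 i
    · intro i; rw [form_fl]; exact hP1 i
    · intro i; rw [form_fl]; exact hP2 i
    · intro i hh; exact hPne i (fl_inj hh)
    · intro i
      rw [det_fl]
      by_contra hc
      nlinarith [hs1 i]
    · intro i
      rw [det_fl]
      by_contra hc
      nlinarith [hs2 i]
    · intro i j; rw [form_fl, form_fl]; exact hR i j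
  · refine core hn v P R hv1 hv2 hv ?_ hP0 hP1 hP2 hPne ?_ ?_ hR
    · intro i j h1 h2
      exact (mul_pos_iff_of_pos_left h).mp (hpos i j h1 h2)
    · intro i
      exact nonneg_of_mul_nonneg_right (hs1 i) h
    · intro i
      exact nonneg_of_mul_nonneg_right (hs2 i) h

end FV

/-- Discrete four vertex theorem for convex hyperbolic polygons: a convex generic
coherent hyperbolic polygon with at least four vertices has at least four locally
extremal vertices, i.e. the cyclic sequence of circumradii `R i` of consecutive vertex
triples has at least two strict local maxima and at least two strict local minima. -/
theorem stmt12 {n : ℕ} [NeZero n] (hn : 4 ≤ n)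
    (V O : ZMod n → UpperHalfPlane) (R : ZMod n → ℝ)
    -- P is a simple closed polygon:
    (hinj : Function.Injective V)
    (hsimple : ∀ i j : ZMod n, j ≠ i → j ≠ i + 1 → j + 1 ≠ i →
      Disjoint (GSeg (V i) (V (i + 1))) (GSeg (V j) (V (j + 1))))
    (hadj : ∀ i : ZMod n,
      GSeg (V i) (V (i + 1)) ∩ GSeg (V (i + 1)) (V (i + 2)) = {V (i + 1)})
    -- generic: every three consecutive vertices lie on a hyperbolic circle with
    -- center O i and radius R i, no four vertices are concyclic, and no three lie
    -- on a common geodesic: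
    (hcirc : ∀ i : ZMod n, dist (O i) (V (i - 1)) = R i ∧ dist (O i) (V i) = R i ∧
      dist (O i) (V (i + 1)) = R i)
    (hRpos : ∀ i, 0 < R i)
    (hgen4 : ¬∃ (c : UpperHalfPlane) (r : ℝ) (i j k l : ZMod n),
      i ≠ j ∧ i ≠ k ∧ i ≠ l ∧ j ≠ k ∧ j ≠ l ∧ k ≠ l ∧
      dist c (V i) = r ∧ dist c (V j) = r ∧ dist c (V k) = r ∧ dist c (V l) = r)
    (hgen3 : ∀ i j k : ZMod n, i ≠ j → i ≠ k → j ≠ k →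
      ¬HCollinear (V i) (V j) (V k))
    -- convex: the vertices are in convex position:
    (hconvex : ∀ i : ZMod n, V i ∉ HConvexHull (V '' {j | j ≠ i}))
    -- coherent: each circumcenter lies in the infinite cone at the middle vertex:
    (hcoh : ∀ i : ZMod n, O i ∈ HCone (V i) (V (i - 1)) (V (i + 1))) :
    2 ≤ Set.ncard {i : ZMod n | R (i - 1) < R i ∧ R (i + 1) < R i} ∧
    2 ≤ Set.ncard {i : ZMod n | R i < R (i - 1) ∧ R i < R (i + 1)} := by
  have cne : ∀ (i : ZMod n) (s t : ℕ), s < n → t < n → s ≠ t →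
      i + (s : ZMod n) ≠ i + (t : ZMod n) := fun i s t hs ht hst h =>
    FV.cast_ne hs ht hst (add_left_cancel h)
  have hnz : ∀ i j : ZMod n, j ≠ i → j ≠ i + 1 →
      FV.det (FV.vec (V i)) (FV.vec (V (i + 1))) (FV.vec (V j)) ≠ 0 := by
    intro i j h1 h2
    apply FV.det_ne_zero
    refine hgen3 i (i + 1) j ?_ h1.symm h2.symm
    have := cne i 0 1 (by omega) (by omega) (by omega)
    simpa using this
  set D : ZMod n → ZMod n → ℝ := fun i j =>
    FV.det (FV.vec (V i)) (FV.vec (V (i + 1))) (FV.vec (V j)) with hD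
  have tne : ∀ (i : ZMod n) (t : ℕ), 2 ≤ t → t < n → i + (t : ZMod n) ≠ i ∧
      i + (t : ZMod n) ≠ i + 1 := by
    intro i t h2 ht
    have a := cne i t 0 ht (by omega) (by omega)
    have b := cne i t 1 ht (by omega) (by omega)
    simp only [Nat.cast_zero, add_zero, Nat.cast_one] at a b
    exact ⟨a, b⟩
  have i01 : ∀ i : ZMod n, i + 1 ≠ i := by
    intro i
    have := cne i 1 0 (by omega) (by omega) (by omega)
    simpa using this
  have step2 : ∀ (i : ZMod n) (t : ℕ), 2 ≤ t → t + 1 < n →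
      0 < D i (i + t) * D i (i + (t + 1 : ℕ)) := by
    intro i t h2 ht
    obtain ⟨a1, a2⟩ := tne i t h2 (by omega)
    obtain ⟨b1, b2⟩ := tne i (t + 1) (by omega) ht
    have hz1 := hnz i _ a1 a2
    have hz2 := hnz i _ b1 b2
    rcases lt_or_gt_of_ne (mul_ne_zero hz1 hz2) with h | h
    · exfalso
      have hc : i + ((t + 1 : ℕ) : ZMod n) = i + t + 1 := by push_cast; ring
      rw [hc] at h b1 b2
      rcases FV.cross_main _ _ _ _ h with ⟨z, hz, hz'⟩ | ⟨z, hz, hz'⟩ | ⟨z, hz, hz'⟩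
      · exact Set.disjoint_left.mp (hsimple i (i + t) a1 a2 b1) hz hz'
      · exact hconvex i (FV.hull_aux (S := V '' {j | j ≠ i}) ⟨i + 1, i01 i, rfl⟩
          ⟨_, a1, rfl⟩ ⟨_, b1, rfl⟩ hz hz')
      · exact hconvex (i + 1) (FV.hull_aux (S := V '' {j | j ≠ i + 1}) ⟨i, (i01 i).symm, rfl⟩
          ⟨_, a2, rfl⟩ ⟨_, b2, rfl⟩ hz hz')
    · exact h
  have step3 : ∀ (i : ZMod n) (t : ℕ), 2 ≤ t → t < n → 0 < D i (i + 2) * D i (i + t) := by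
    intro i t h2
    induction t, h2 using Nat.le_induction with
    | base =>
      intro ht
      obtain ⟨a1, a2⟩ := tne i 2 (by omega) ht
      have hz1 := hnz i _ a1 a2
      have : 0 < D i (i + (2 : ℕ)) * D i (i + (2 : ℕ)) := mul_self_pos.mpr hz1
      simpa using this
    | succ t h2 ih =>
      intro ht
      have e1 := ih (by omega)
      have e2 := step2 i t h2 ht
      have e3 : 0 < (D i (i + t)) ^ 2 * (D i (i + 2) * D i (i + (t + 1 : ℕ))) := by
        have := mul_pos e1 e2
        linarith
      exact pos_of_mul_pos_right e3 (sq_nonneg _)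
  have step4 : ∀ i j : ZMod n, j ≠ i → j ≠ i + 1 → 0 < D i (i + 2) * D i j := by
    intro i j h1 h2
    have hj : j = i + ((j - i).val : ZMod n) := by
      rw [ZMod.natCast_zmod_val]; ring
    have hlt : (j - i).val < n := ZMod.val_lt _
    rw [hj]
    apply step3 _ _ _ hlt
    by_contra hlt2
    have : (j - i).val = 0 ∨ (j - i).val = 1 := by omega
    rcases this with h | h
    · rw [h] at hj; simp at hj; exact h1 hj
    · rw [h] at hj; simp at hj; exact h2 hj
  have step5 : ∀ i : ZMod n, 0 < D i (i + 2) * D (i + 1) (i + 1 + 2) := by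
    intro i
    have := step4 (i + 1) i (i01 i).symm (by
      have := cne i 0 2 (by omega) (by omega) (by omega)
      simp only [Nat.cast_zero, add_zero, Nat.cast_ofNat] at this
      rwa [add_assoc, one_add_one_eq_two])
    have e : D (i + 1) i = D i (i + 2) := by
      simp only [hD]
      rw [← FV.det_cyc, add_assoc i 1 1, one_add_one_eq_two]
    rw [e] at this
    linarith
  have step6 : ∀ t : ℕ, 0 < D 0 (0 + 2) * D (t : ZMod n) (t + 2) := by
    intro t
    induction t with
    | zero =>
      have := tne 0 2 (by omega) (by omega)
      have hz := hnz 0 (0 + 2) (by simpa using this.1) (by simpa using this.2)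
      have hz' : 0 < D 0 (0 + 2) * D 0 (0 + 2) := mul_self_pos.mpr hz
      simpa using hz'
    | succ t ih =>
      have e2 := step5 t
      have e3 : 0 < (D t (t + 2)) ^ 2 *
          (D 0 (0 + 2) * D (t + 1 : ZMod n) (t + 1 + 2)) := by
        have := mul_pos ih e2
        linarith
      have := pos_of_mul_pos_right e3 (sq_nonneg _)
      simpa using this
  have step7 : ∀ i j : ZMod n, j ≠ i → j ≠ i + 1 → 0 < D 0 (0 + 2) * D i j := by
    intro i j h1 h2
    have e1 := step6 i.val
    rw [ZMod.natCast_zmod_val] at e1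
    have e2 := step4 i j h1 h2
    have e3 : 0 < (D i (i + 2)) ^ 2 * (D 0 (0 + 2) * D i j) := by
      have := mul_pos e1 e2
      linarith
    exact pos_of_mul_pos_right e3 (sq_nonneg _)
  have im1 : ∀ i : ZMod n, i - 1 ≠ i ∧ i - 1 ≠ i + 1 := by
    intro i
    have a := cne (i - 1) 0 1 (by omega) (by omega) (by omega)
    have b := cne (i - 1) 0 2 (by omega) (by omega) (by omega)
    simp only [Nat.cast_zero, add_zero, Nat.cast_one, Nat.cast_ofNat] at a b
    refine ⟨by simpa using a, ?_⟩
    intro h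
    apply b
    rw [h]
    linear_combination h
  have hcone : ∀ i : ZMod n, ∃ α β σ : ℝ, 0 ≤ α ∧ 0 ≤ β ∧ FV.vec (O i) =
      α • FV.vec (V (i - 1)) + β • FV.vec (V (i + 1)) + σ • FV.vec (V i) := by
    intro i
    apply FV.cone_rep _ (hcoh i)
    intro h
    exact hgen3 i (i - 1) (i + 1) (im1 i).1.symm (i01 i).symm (im1 i).2 (Or.inl h)
  have hcp : ∀ i, 0 < Real.cosh (R i) := fun i => Real.cosh_pos _
  have hform : ∀ (i : ZMod n) (w : FV.E),
      FV.dt (FV.du ((Real.cosh (R i))⁻¹ • FV.vec (O i))) w =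
        (Real.cosh (R i))⁻¹ * FV.dt (FV.du (FV.vec (O i))) w := by
    intro i w
    simp only [FV.dt, FV.du, Prod.smul_fst, Prod.smul_snd, smul_eq_mul]; ring
  have hself : ∀ i : ZMod n, FV.dt (FV.du ((Real.cosh (R i))⁻¹ • FV.vec (O i)))
      ((Real.cosh (R i))⁻¹ • FV.vec (O i)) = ((Real.cosh (R i))⁻¹) ^ 2 := by
    intro i
    rw [hform, FV.form_comm, hform, FV.form_self]; ring
  refine FV.core2 hn (fun i => FV.vec (V i)) (fun i => (Real.cosh (R i))⁻¹ • FV.vec (O i)) R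
    (D 0 (0 + 2)) ?_ (fun i => FV.vec_fst_pos _) (fun i => FV.vec_snd_pos _)
    (fun i => FV.vec_unit _) step7 ?_ ?_ ?_ ?_ ?_ ?_ ?_
  · have := tne 0 2 (by omega) (by omega)
    exact hnz 0 (0 + 2) (by simpa using this.1) (by simpa using this.2)
  · intro i
    rw [hform, ← FV.cosh_dist_vec, (hcirc i).1, inv_mul_cancel₀ (hcp i).ne']
  · intro i
    rw [hform, ← FV.cosh_dist_vec, (hcirc i).2.1, inv_mul_cancel₀ (hcp i).ne']
  · intro i
    rw [hform, ← FV.cosh_dist_vec, (hcirc i).2.2, inv_mul_cancel₀ (hcp i).ne']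
  · intro i h
    have hs := hself (i + 1)
    rw [h, hself i] at hs
    have hc : (Real.cosh (R i))⁻¹ = (Real.cosh (R (i + 1)))⁻¹ :=
      (sq_eq_sq₀ (inv_pos.mpr (hcp _)).le (inv_pos.mpr (hcp _)).le).mp hs
    rw [← hc] at h
    have hO : O (i + 1) = O i :=
      FV.vec_inj (smul_right_injective FV.E (inv_pos.mpr (hcp i)).ne' h)
    have h0 := hcirc i
    have h1 := hcirc (i + 1)
    rw [hO, add_sub_cancel_right] at h1
    have hi2 := tne i 2 (by omega) (by omega)
    simp only [Nat.cast_ofNat] at hi2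
    have e2 : i + 1 + 1 = i + 2 := by rw [add_assoc, one_add_one_eq_two]
    rw [e2] at h1
    have hi3 : i - 1 ≠ i + 2 := by
      have := cne (i - 1) 0 3 (by omega) (by omega) (by omega)
      simp only [Nat.cast_zero, add_zero, Nat.cast_ofNat] at this
      intro h
      apply this
      linear_combination h
    exact hgen4 ⟨O i, R i, i - 1, i, i + 1, i + 2, (im1 i).1, (im1 i).2, hi3, (i01 i).symm,
      hi2.1.symm, hi2.2.symm, h0.1, h0.2.1, h0.2.2, by
        rw [h1.2.2, ← h1.1, h0.2.1]⟩
  · intro i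
    obtain ⟨α, β, σ, hα, hβ, e⟩ := hcone i
    rw [FV.det_smul_right, e, FV.det_comb, FV.det_self_mid, FV.det_self_out]
    have h7 := step7 i (i - 1) (im1 i).1 (im1 i).2
    simp only [hD] at h7 ⊢
    have hc := inv_pos.mpr (hcp i)
    have := mul_nonneg hc.le (mul_nonneg hα h7.le)
    linarith
  · intro i
    obtain ⟨α, β, σ, hα, hβ, e⟩ := hcone (i + 1)
    rw [add_sub_cancel_right] at e
    rw [FV.det_smul_right, e, FV.det_comb, FV.det_self_mid, FV.det_self_out]
    have e2 : i + 1 + 1 = i + 2 := by rw [add_assoc, one_add_one_eq_two]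
    rw [e2]
    have hi2 := tne i 2 (by omega) (by omega)
    simp only [Nat.cast_ofNat] at hi2
    have h7 := step7 i (i + 2) hi2.1 hi2.2
    simp only [hD] at h7 ⊢
    have hc := inv_pos.mpr (hcp (i + 1))
    have := mul_nonneg hc.le (mul_nonneg hβ h7.le)
    linarith
  · intro i j
    rw [hself, hself, sq_lt_sq₀ (inv_pos.mpr (hcp _)).le (inv_pos.mpr (hcp _)).le,
      inv_lt_inv₀ (hcp _) (hcp _), Real.cosh_lt_cosh, abs_of_pos (hRpos j), abs_of_pos (hRpos i)]
end

section
/- Let P be a convex generic coherent hyperbolic polygon. For consecutive vertices Vᵢ₋₁, Vᵢ with circumcircles Cᵢ₋₁ (through Vᵢ₋₂,Vᵢ₋₁,Vᵢ) and Cᵢ (through Vᵢ₋₁,Vᵢ,Vᵢ₊₁) of radii Rᵢ₋₁ and Rᵢ: Vᵢ₊₁ lies strictly inside Cᵢ₋₁ if and only if Rᵢ₋₁ > Rᵢ, and Vᵢ₊₁ lies strictly outside Cᵢ₋₁ if and only if Rᵢ₋₁ < Rᵢ. -/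
open Real

/-- Hyperboloid coordinates of a point of the upper half-plane. -/
noncomputable def hp (z : UpperHalfPlane) : ℝ := 1 / z.im
noncomputable def hq (z : UpperHalfPlane) : ℝ := z.re / z.im
noncomputable def hr (z : UpperHalfPlane) : ℝ := (z.re ^ 2 + z.im ^ 2) / z.im

/-- The determinant of three points in hyperboloid coordinates (side function). -/
noncomputable def hdet (A B C : UpperHalfPlane) : ℝ :=
  hp A * (hq B * hr C - hr B * hq C) - hq A * (hp B * hr C - hr B * hp C)
    + hr A * (hp B * hq C - hq B * hp C)

/-- `cosh` of the distance. -/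
noncomputable def ch (A B : UpperHalfPlane) : ℝ := Real.cosh (dist A B)

lemma hcosh_inj {x y : ℝ} (hx : 0 ≤ x) (hy : 0 ≤ y) : Real.cosh x = Real.cosh y ↔ x = y := by
  constructor
  · intro h
    have h1 := Real.cosh_le_cosh.mp h.le
    have h2 := Real.cosh_le_cosh.mp h.ge
    rw [abs_of_nonneg hx, abs_of_nonneg hy] at h1 h2
    exact le_antisymm h1 h2
  · rintro rfl; rfl

lemma hp_pos (z : UpperHalfPlane) : 0 < hp z := by
  have := z.im_pos
  unfold hp; positivity

lemma hnorm (z : UpperHalfPlane) : hp z * hr z - hq z ^ 2 = 1 := by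
  have := z.im_pos.ne'
  unfold hp hq hr; field_simp; ring

lemma ch_eq (z w : UpperHalfPlane) :
    ch z w = (hp z * hr w + hp w * hr z - 2 * hq z * hq w) / 2 := by
  have h1 := z.im_pos.ne'
  have h2 := w.im_pos.ne'
  unfold ch
  rw [UpperHalfPlane.cosh_dist, Complex.dist_eq, Complex.sq_norm, Complex.normSq_apply]
  unfold hp hq hr
  simp
  field_simp; ring

lemma ch_comm (z w : UpperHalfPlane) : ch z w = ch w z := by
  unfold ch; rw [dist_comm]

lemma ch_self (z : UpperHalfPlane) : ch z z = 1 := by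
  unfold ch; simp

lemma ch_pos (z w : UpperHalfPlane) : 0 < ch z w := Real.cosh_pos _

lemma one_lt_ch {z w : UpperHalfPlane} (h : z ≠ w) : 1 < ch z w := by
  unfold ch
  rw [Real.one_lt_cosh]
  exact dist_ne_zero.mpr h

lemma ch_lt {a b c d : UpperHalfPlane} : ch a b < ch c d ↔ dist a b < dist c d := by
  unfold ch
  rw [Real.cosh_lt_cosh, abs_of_nonneg dist_nonneg, abs_of_nonneg dist_nonneg]

lemma eq_of_ch {z w : UpperHalfPlane} (h : ch z w = 1) : z = w := by
  by_contra hne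
  exact absurd h (one_lt_ch hne).ne'

lemma exists_pt (p q r : ℝ) (hp0 : 0 < p) (h : p * r - q ^ 2 = 1) :
    ∃ z : UpperHalfPlane, hp z = p ∧ hq z = q ∧ hr z = r := by
  refine ⟨⟨⟨q / p, 1 / p⟩, by simpa using hp0⟩, ?_, ?_, ?_⟩
  · simp [hp]
  · have : p ≠ 0 := hp0.ne'
    simp [hq]
    field_simp
  · have : p ≠ 0 := hp0.ne'
    simp [hr]
    field_simp
    linarith

/-- `z` is the combination `α A + β B`. -/
def Comb (z A B : UpperHalfPlane) (α β : ℝ) : Prop :=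
  hp z = α * hp A + β * hp B ∧ hq z = α * hq A + β * hq B ∧ hr z = α * hr A + β * hr B

lemma comb_ch {z A B : UpperHalfPlane} {α β : ℝ} (h : Comb z A B α β) (w : UpperHalfPlane) :
    ch z w = α * ch A w + β * ch B w := by
  obtain ⟨h1, h2, h3⟩ := h
  simp only [ch_eq, h1, h2, h3]; ring

lemma comb_det {z A B : UpperHalfPlane} {α β : ℝ} (h : Comb z A B α β) (u v : UpperHalfPlane) :
    hdet u v z = α * hdet u v A + β * hdet u v B := by
  obtain ⟨h1, h2, h3⟩ := h
  simp only [hdet, h1, h2, h3]; ring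

lemma hdet_left (u v : UpperHalfPlane) : hdet u v u = 0 := by unfold hdet; ring
lemma hdet_right (u v : UpperHalfPlane) : hdet u v v = 0 := by unfold hdet; ring

/-- Positive combinations normalise to points. -/
lemma exists_comb (A B : UpperHalfPlane) (a b : ℝ) (ha : 0 ≤ a) (hb : 0 ≤ b) (hab : 0 < a + b) :
    ∃ z : UpperHalfPlane, ∃ t : ℝ, 0 < t ∧ Comb z A B (t * a) (t * b) := by
  have hN : 0 < a ^ 2 + b ^ 2 + 2 * a * b * ch A B := by
    have := ch_pos A B
    have h1 : 0 ≤ 2 * a * b * ch A B := by positivity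
    rcases ha.eq_or_lt with h | h
    · have : 0 < b := by linarith
      nlinarith
    · nlinarith [sq_nonneg b]
  set N := a ^ 2 + b ^ 2 + 2 * a * b * ch A B with hNd
  have hs : 0 < √N := Real.sqrt_pos.mpr hN
  have hs2 : √N ^ 2 = N := Real.sq_sqrt hN.le
  have hpos : 0 < a * hp A + b * hp B := by
    have h1 := hp_pos A
    have h2 := hp_pos B
    rcases ha.eq_or_lt with h | h
    · have : 0 < b := by linarith
      have := mul_pos this h2
      rw [← h]; linarith
    · have := mul_pos h h1
      have := mul_nonneg hb h2.le
      linarith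
  obtain ⟨z, h1, h2, h3⟩ := exists_pt ((√N)⁻¹ * (a * hp A + b * hp B))
    ((√N)⁻¹ * (a * hq A + b * hq B)) ((√N)⁻¹ * (a * hr A + b * hr B)) (by positivity) (by
      have e : (√N)⁻¹ ^ 2 * N = 1 := by
        rw [inv_pow, hs2]; exact inv_mul_cancel₀ hN.ne'
      have hN2 := hNd
      rw [ch_eq] at hN2
      linear_combination e - (√N)⁻¹ ^ 2 * hN2 + (√N)⁻¹ ^ 2 * a ^ 2 * hnorm A + (√N)⁻¹ ^ 2 * b ^ 2 * hnorm B)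
  refine ⟨z, (√N)⁻¹, by positivity, ?_, ?_, ?_⟩
  · rw [h1]; ring
  · rw [h2]; ring
  · rw [h3]; ring

/-- Points of a segment are nonnegative combinations. -/
lemma comb_of_mem {A B z : UpperHalfPlane} (h : z ∈ GSeg A B) :
    ∃ α β : ℝ, 0 ≤ α ∧ 0 ≤ β ∧ Comb z A B α β := by
  have h : dist A z + dist z B = dist A B := h
  by_cases hAB : A = B
  · subst hAB
    have h0 : dist A z = 0 := by
      rw [dist_self, dist_comm z A] at h; linarith
    have : A = z := dist_eq_zero.mp h0
    subst this
    exact ⟨1, 0, by norm_num, le_refl _, by simp [Comb]⟩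
  have hd : 0 < dist A B := dist_pos.mpr hAB
  have hu : 0 ≤ Real.sinh (dist A z) := Real.sinh_nonneg_iff.mpr dist_nonneg
  have hv : 0 ≤ Real.sinh (dist z B) := Real.sinh_nonneg_iff.mpr dist_nonneg
  have hsum : 0 < Real.sinh (dist z B) + Real.sinh (dist A z) := by
    rcases (dist_nonneg : 0 ≤ dist A z).eq_or_lt with h0 | h0
    · have : 0 < dist z B := by linarith
      have := Real.sinh_pos_iff.mpr this
      linarith
    · have := Real.sinh_pos_iff.mpr h0
      linarith
  obtain ⟨w, t, ht, hw⟩ := exists_comb A B _ _ hv hu hsum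
  have hzw : ch w z = t * Real.sinh (dist A B) := by
    rw [comb_ch hw, ← h, Real.sinh_add, ch_comm B z]; unfold ch; ring
  have hww : 1 = (t * Real.sinh (dist A B)) ^ 2 := by
    have e1 := comb_ch hw w
    rw [ch_self, ch_comm A, ch_comm B, comb_ch hw, comb_ch hw, ch_self, ch_self,
      ch_comm B A] at e1
    have e2 : ch A B = Real.cosh (dist A z) * Real.cosh (dist z B)
      + Real.sinh (dist A z) * Real.sinh (dist z B) := by
      unfold ch; rw [← h, Real.cosh_add]
    rw [e2] at e1
    rw [e1, ← h, Real.sinh_add]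
    have c1 := Real.cosh_sq (dist A z)
    have c2 := Real.cosh_sq (dist z B)
    linear_combination (-t ^ 2 * Real.sinh (dist z B) ^ 2) * c1
      - t ^ 2 * Real.sinh (dist A z) ^ 2 * c2
  have hone : ch w z = 1 := by
    have h1 := ch_pos w z
    rw [hzw] at h1 ⊢
    nlinarith
  have := eq_of_ch hone
  subst this
  exact ⟨_, _, by positivity, by positivity, hw⟩

/-- Nonnegative combinations lie on the segment. -/
lemma mem_of_comb {A B z : UpperHalfPlane} {α β : ℝ} (ha : 0 ≤ α) (hb : 0 ≤ β)
    (h : Comb z A B α β) : z ∈ GSeg A B := by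
  show dist A z + dist z B = dist A B
  have e1 : ch A z = α + β * ch A B := by
    rw [ch_comm, comb_ch h, ch_self, ch_comm B A]; ring
  have e2 : ch z B = α * ch A B + β := by
    rw [comb_ch h, ch_self]; ring
  have e3 : 1 = α ^ 2 + β ^ 2 + 2 * α * β * ch A B := by
    have := comb_ch h z
    rw [ch_self, e1, ch_comm B z, e2] at this
    rw [this]; ring
  have hs := Real.cosh_sq (dist A B)
  have hu := Real.cosh_sq (dist A z)
  have hv := Real.cosh_sq (dist z B)
  have p0 : 0 ≤ Real.sinh (dist A B) := Real.sinh_nonneg_iff.mpr dist_nonneg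
  have p1 : 0 ≤ Real.sinh (dist A z) := Real.sinh_nonneg_iff.mpr dist_nonneg
  have p2 : 0 ≤ Real.sinh (dist z B) := Real.sinh_nonneg_iff.mpr dist_nonneg
  unfold ch at e1 e2 e3
  have s1 : Real.sinh (dist A z) = β * Real.sinh (dist A B) := by
    rw [← sq_eq_sq₀ p1 (by positivity)]
    rw [e1] at hu
    linear_combination -hu + β ^ 2 * hs - e3
  have s2 : Real.sinh (dist z B) = α * Real.sinh (dist A B) := by
    rw [← sq_eq_sq₀ p2 (by positivity)]
    rw [e2] at hv
    linear_combination -hv + α ^ 2 * hs - e3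
  have hc : Real.cosh (dist A z + dist z B) = Real.cosh (dist A B) := by
    rw [Real.cosh_add, e1, e2, s1, s2]
    linear_combination (-α * β) * hs - Real.cosh (dist A B) * e3
  rwa [hcosh_inj] at hc <;> positivity

lemma gram (B C X Y : UpperHalfPlane) :
    ch X Y * (1 - ch B C ^ 2) - ch X B * ch Y B - ch X C * ch Y C
      + ch B C * (ch X B * ch Y C + ch X C * ch Y B) = hdet B C X * hdet B C Y / 4 := by
  have hB := hnorm B
  have hC := hnorm C
  have key : ch X Y * ((hp B * hr B - hq B ^ 2) * (hp C * hr C - hq C ^ 2) - ch B C ^ 2)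
      - ch X B * ch Y B * (hp C * hr C - hq C ^ 2)
      - ch X C * ch Y C * (hp B * hr B - hq B ^ 2)
      + ch B C * (ch X B * ch Y C + ch X C * ch Y B) = hdet B C X * hdet B C Y / 4 := by
    simp only [ch_eq, hdet]; ring
  rw [hB, hC] at key
  linarith

/-- Vanishing determinant forces a metric betweenness relation. -/
lemma coll_of_det {B C X : UpperHalfPlane} (h : hdet B C X = 0) :
    X ∈ GSeg B C ∨ B ∈ GSeg X C ∨ C ∈ GSeg B X := by
  have g := gram B C X X
  rw [h, ch_self] at g
  have e : (ch B C - Real.cosh (dist B X + dist X C)) *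
      (ch B C - Real.cosh (dist B X - dist X C)) = 0 := by
    rw [Real.cosh_add, Real.cosh_sub]
    have h1 := Real.cosh_sq (dist B X)
    have h2 := Real.cosh_sq (dist X C)
    rw [ch_comm X B] at g
    unfold ch at g ⊢
    have h3 : Real.sinh (dist B X) ^ 2 = Real.cosh (dist B X) ^ 2 - 1 := by linarith
    have h4 : Real.sinh (dist X C) ^ 2 = Real.cosh (dist X C) ^ 2 - 1 := by linarith
    have h5 : Real.sinh (dist B X) ^ 2 * Real.sinh (dist X C) ^ 2 =
      (Real.cosh (dist B X) ^ 2 - 1) * (Real.cosh (dist X C) ^ 2 - 1) := by rw [h3, h4]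
    linear_combination -g - h5
  rcases mul_eq_zero.mp e with e | e
  · left
    have e' : Real.cosh (dist B X + dist X C) = Real.cosh (dist B C) := by
      unfold ch at e; linarith
    show dist B X + dist X C = dist B C
    rwa [hcosh_inj] at e' <;> positivity
  · right
    have e' : Real.cosh |dist B X - dist X C| = Real.cosh (dist B C) := by
      unfold ch at e; rw [Real.cosh_abs]; linarith
    rw [hcosh_inj (abs_nonneg _) dist_nonneg] at e'
    rcases abs_cases (dist B X - dist X C) with ⟨h1, _⟩ | ⟨h1, _⟩
    · right
      show dist B C + dist C X = dist B X
      rw [dist_comm C X]; linarith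
    · left
      show dist X B + dist B C = dist X C
      rw [dist_comm X B]; linarith

lemma gseg_comm {A B z : UpperHalfPlane} (h : z ∈ GSeg A B) : z ∈ GSeg B A := by
  have h : dist A z + dist z B = dist A B := h
  show dist B z + dist z A = dist B A
  rw [dist_comm B z, dist_comm z A, dist_comm B A]; linarith

lemma left_mem (A B : UpperHalfPlane) : A ∈ GSeg A B := by
  show dist A A + dist A B = dist A B
  simp

/-- Points of the cone at `B` spanned by `A, C` are on the `A`-side of any line `u v`
through `B`, `C`. -/
lemma cone_side {A B C z : UpperHalfPlane} (u v : UpperHalfPlane) (hB : hdet u v B = 0)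
    (hC : hdet u v C = 0) (hncol : B ∉ GSeg A C) (hz : z ∈ HCone B A C) :
    0 ≤ hdet u v A * hdet u v z := by
  obtain ⟨w, hw, hz⟩ := hz
  obtain ⟨a, b, ha, hb, hc⟩ := comb_of_mem hw
  have hdw : hdet u v w = a * hdet u v A := by rw [comb_det hc, hC]; ring
  rcases hz with hz | hz
  · obtain ⟨a', b', ha', hb', hc'⟩ := comb_of_mem hz
    have hd : hdet u v w = b' * hdet u v z := by rw [comb_det hc', hB]; ring
    rcases hb'.eq_or_lt with h0 | h0
    · exfalso
      apply hncol
      have : w = B := by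
        have e1 := comb_ch hc' w
        have e2 := comb_ch hc' B
        rw [ch_self, ← h0, ch_comm B w] at e1
        rw [ch_self, ← h0] at e2
        apply eq_of_ch
        have := ch_pos w B
        have e3 : ch w B = a' := by linarith
        rw [e3] at e1 this
        rw [e3]
        nlinarith
      rwa [← this]
    · have : 0 ≤ b' * (hdet u v A * hdet u v z) := by
        have : b' * (hdet u v A * hdet u v z) = a * (hdet u v A * hdet u v A) := by
          linear_combination hdet u v A * (hdw - hd)
        rw [this]
        exact mul_nonneg ha (mul_self_nonneg _)
      exact nonneg_of_mul_nonneg_right this h0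
  · obtain ⟨a', b', ha', hb', hc'⟩ := comb_of_mem hz
    have hd : hdet u v z = b' * hdet u v w := by rw [comb_det hc', hB]; ring
    rw [hd, hdw]
    have : hdet u v A * (b' * (a * hdet u v A)) = b' * a * (hdet u v A * hdet u v A) := by ring
    rw [this]
    exact mul_nonneg (mul_nonneg hb' ha) (mul_self_nonneg _)

/-- The core comparison of two circles through `B` and `C`. -/
lemma core {B C D O O' : UpperHalfPlane} (hBC : B ≠ C)
    (h1 : ch O B = ch O C) (h2 : ch O D = ch O C) (h3 : ch O' B = ch O' C)
    (hD : hdet B C D ≠ 0)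
    (hO : 0 ≤ hdet B C D * hdet B C O) (hO' : 0 ≤ hdet B C D * hdet B C O') :
    (ch O C < ch O' C → ch O' D < ch O' C) ∧ (ch O' C < ch O C → ch O' C < ch O' D) ∧
    (ch O C = ch O' C → ch O' D = ch O' C) := by
  have g1 := gram B C O O
  have g2 := gram B C O' O'
  have g3 := gram B C O D
  have g4 := gram B C O' D
  rw [ch_self, h1] at g1
  rw [ch_self, h3] at g2
  rw [h1, h2] at g3
  rw [h3] at g4
  have hc : 1 < ch B C := one_lt_ch hBC
  have hk := ch_pos O C
  have hk' := ch_pos O' C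
  have hD2 : 0 < hdet B C D ^ 2 := by positivity
  generalize ch O C = k at *
  generalize ch O' C = k' at *
  generalize ch B C = c at *
  generalize hdet B C D = s at *
  generalize hdet B C O = t at *
  generalize hdet B C O' = t' at *
  generalize ch O' D = f at *
  have I1 : 4 * k * (c ^ 2 - 1) * (k' - f) = k * (s * t') - k' * (s * t) := by
    linear_combination 4 * k * g4 - 4 * k' * g3
  have I2 : (k * (s * t')) ^ 2 - (k' * (s * t)) ^ 2 = 4 * s ^ 2 * (c ^ 2 - 1) * (k' ^ 2 - k ^ 2) := by
    linear_combination (-4 * s ^ 2 * k ^ 2) * g2 + 4 * s ^ 2 * k' ^ 2 * g1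
  have hx : 0 ≤ k * (s * t') := by positivity
  have hy : 0 ≤ k' * (s * t) := by positivity
  generalize k * (s * t') = x at *
  generalize k' * (s * t) = y at *
  have hm : 0 < c ^ 2 - 1 := by nlinarith
  have hM : 0 < 4 * k * (c ^ 2 - 1) := by positivity
  have hL : 0 < 4 * s ^ 2 * (c ^ 2 - 1) := by positivity
  refine ⟨fun h => ?_, fun h => ?_, fun h => ?_⟩
  · have : 0 < x ^ 2 - y ^ 2 := by
      rw [I2]; exact mul_pos hL (by nlinarith)
    have hxy : 0 < x - y := by nlinarith
    rw [← I1] at hxy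
    have := pos_of_mul_pos_right hxy hM.le
    linarith
  · have : 0 < y ^ 2 - x ^ 2 := by
      have := mul_pos hL (show 0 < k ^ 2 - k' ^ 2 by nlinarith)
      linarith
    have hxy : 0 < y - x := by nlinarith
    have : 0 < 4 * k * (c ^ 2 - 1) * (f - k') := by linarith
    have := pos_of_mul_pos_right this hM.le
    linarith
  · have : x ^ 2 = y ^ 2 := by
      rw [h] at I2; linarith
    have hxy : x = y := (sq_eq_sq₀ hx hy).mp this
    have : 4 * k * (c ^ 2 - 1) * (k' - f) = 0 := by rw [I1, hxy]; ring
    have := (mul_eq_zero.mp this).resolve_left hM.ne'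
    linarith

/-- If the endpoints of segment `U W` are strictly on opposite sides of `B C`, then the
segment meets the line `B C`. -/
lemma exists_cross {B C U W : UpperHalfPlane} (h : hdet B C U * hdet B C W < 0) :
    ∃ X ∈ GSeg U W, X ∈ GSeg B C ∨ B ∈ GSeg X C ∨ C ∈ GSeg B X := by
  have hU : hdet B C U ≠ 0 := by rintro h0; rw [h0] at h; simp at h
  have hU' : 0 < |hdet B C U| := abs_pos.mpr hU
  obtain ⟨X, t, ht, hX⟩ := exists_comb U W |hdet B C W| |hdet B C U| (abs_nonneg _)
    (abs_nonneg _) (by have := abs_nonneg (hdet B C W); linarith)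
  refine ⟨X, mem_of_comb (by positivity) (by positivity) hX, coll_of_det ?_⟩
  rw [comb_det hX]
  rcases mul_neg_iff.mp h with ⟨a, b⟩ | ⟨a, b⟩
  · rw [abs_of_pos a, abs_of_neg b]; ring
  · rw [abs_of_neg a, abs_of_pos b]; ring

lemma mem_hull {S : Set UpperHalfPlane} {U W C X B : UpperHalfPlane} (hU : U ∈ S) (hW : W ∈ S)
    (hC : C ∈ S) (hX : X ∈ GSeg U W) (hB : B ∈ GSeg X C) : B ∈ HConvexHull S := by
  rintro T ⟨hT, hST⟩
  exact hT X (hT U (hST hU) W (hST hW) hX) C (hST hC) hB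

/-- For a convex generic coherent hyperbolic polygon: `V (i+1)` lies strictly inside the
circumcircle `C (i-1)` iff `R (i-1) > R i`, and strictly outside iff `R (i-1) < R i`. -/
theorem stmt13 {n : ℕ} [NeZero n] (hn : 4 ≤ n)
    (V O : ZMod n → UpperHalfPlane) (R : ZMod n → ℝ)
    (hinj : Function.Injective V)
    (hsimple : ∀ i j : ZMod n, j ≠ i → j ≠ i + 1 → j + 1 ≠ i →
      Disjoint (GSeg (V i) (V (i + 1))) (GSeg (V j) (V (j + 1))))
    (hadj : ∀ i : ZMod n,
      GSeg (V i) (V (i + 1)) ∩ GSeg (V (i + 1)) (V (i + 2)) = {V (i + 1)})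
    (hcirc : ∀ i : ZMod n, dist (O i) (V (i - 1)) = R i ∧ dist (O i) (V i) = R i ∧
      dist (O i) (V (i + 1)) = R i)
    (hRpos : ∀ i, 0 < R i)
    (hgen4 : ¬∃ (c : UpperHalfPlane) (r : ℝ) (i j k l : ZMod n),
      i ≠ j ∧ i ≠ k ∧ i ≠ l ∧ j ≠ k ∧ j ≠ l ∧ k ≠ l ∧
      dist c (V i) = r ∧ dist c (V j) = r ∧ dist c (V k) = r ∧ dist c (V l) = r)
    (hgen3 : ∀ i j k : ZMod n, i ≠ j → i ≠ k → j ≠ k →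
      ¬HCollinear (V i) (V j) (V k))
    (hconvex : ∀ i : ZMod n, V i ∉ HConvexHull (V '' {j | j ≠ i}))
    (hcoh : ∀ i : ZMod n, O i ∈ HCone (V i) (V (i - 1)) (V (i + 1))) :
    ∀ i : ZMod n,
      (dist (O (i - 1)) (V (i + 1)) < R (i - 1) ↔ R i < R (i - 1)) ∧
      (R (i - 1) < dist (O (i - 1)) (V (i + 1)) ↔ R (i - 1) < R i) := by
  intro i
  have nz : ∀ m : ℕ, 0 < m → m < n → (m : ZMod n) ≠ 0 := by
    intro m h0 h1 h
    rw [ZMod.natCast_eq_zero_iff] at h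
    exact absurd (Nat.le_of_dvd h0 h) (by omega)
  have n1 : (1 : ZMod n) ≠ 0 := by simpa using nz 1 (by omega) (by omega)
  have n2 : (2 : ZMod n) ≠ 0 := by simpa using nz 2 (by omega) (by omega)
  have n3 : (3 : ZMod n) ≠ 0 := by simpa using nz 3 (by omega) (by omega)
  have hBCi : i - 1 ≠ i := fun h => n1 (by linear_combination -h)
  have hBC : V (i - 1) ≠ V i := fun h => hBCi (hinj h)
  have hne0 : ∀ j, j ≠ i - 1 → j ≠ i → hdet (V (i - 1)) (V i) (V j) ≠ 0 := by
    intro j h1 h2 h0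
    apply hgen3 (i - 1) i j hBCi h1.symm h2.symm
    rcases coll_of_det h0 with h | h | h
    · exact Or.inr (Or.inr h)
    · exact Or.inl (gseg_comm h)
    · exact Or.inr (Or.inl h)
  have hstep : ∀ j, j ≠ i - 1 → j ≠ i → j + 1 ≠ i - 1 →
      0 < hdet (V (i - 1)) (V i) (V j) * hdet (V (i - 1)) (V i) (V (j + 1)) := by
    intro j h1 h2 h3
    have h4 : j + 1 ≠ i := fun h => h1 (by linear_combination h)
    by_contra hneg
    have hlt : hdet (V (i - 1)) (V i) (V j) * hdet (V (i - 1)) (V i) (V (j + 1)) < 0 :=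
      lt_of_le_of_ne (not_lt.mp hneg) (mul_ne_zero (hne0 j h1 h2) (hne0 (j + 1) h3 h4))
    obtain ⟨X, hX, h | h | h⟩ := exists_cross hlt
    · have hd := hsimple (i - 1) j h1 (by rwa [sub_add_cancel]) h3
      rw [sub_add_cancel] at hd
      exact Set.disjoint_left.mp hd h hX
    · exact hconvex (i - 1) (mem_hull ⟨j, h1, rfl⟩ ⟨j + 1, h3, rfl⟩ ⟨i, hBCi.symm, rfl⟩ hX h)
    · exact hconvex i (mem_hull ⟨j, h2, rfl⟩ ⟨j + 1, h4, rfl⟩ ⟨i - 1, hBCi, rfl⟩ hX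
        (gseg_comm h))
  have hD : hdet (V (i - 1)) (V i) (V (i + 1)) ≠ 0 :=
    hne0 _ (fun h => n2 (by linear_combination h)) (fun h => n1 (by linear_combination h))
  have hchain : ∀ m : ℕ, m + 3 ≤ n →
      0 < hdet (V (i - 1)) (V i) (V (i + 1)) * hdet (V (i - 1)) (V i) (V (i + 1 + m)) := by
    intro m
    induction m with
    | zero =>
      intro _
      simpa using hD
    | succ m ih =>
      intro hm
      have h1 := ih (by omega)
      have h2 := hstep (i + 1 + m)
        (fun h => nz (m + 2) (by omega) (by omega) (by push_cast; linear_combination h))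
        (fun h => nz (m + 1) (by omega) (by omega) (by push_cast; linear_combination h))
        (fun h => nz (m + 3) (by omega) (by omega) (by push_cast; linear_combination h))
      have e : i + 1 + ((m + 1 : ℕ) : ZMod n) = i + 1 + m + 1 := by push_cast; ring
      rw [e]
      have h3 := mul_pos h1 h2
      have h4 := hne0 (i + 1 + m)
        (fun h => nz (m + 2) (by omega) (by omega) (by push_cast; linear_combination h))
        (fun h => nz (m + 1) (by omega) (by omega) (by push_cast; linear_combination h))
      have h5 : 0 < hdet (V (i - 1)) (V i) (V (i + 1 + m)) ^ 2 := by positivity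
      refine pos_of_mul_pos_right (a := hdet (V (i - 1)) (V i) (V (i + 1 + m)) ^ 2) ?_ h5.le
      linarith
  have hside : 0 < hdet (V (i - 1)) (V i) (V (i + 1)) * hdet (V (i - 1)) (V i) (V (i - 2)) := by
    have h := hchain (n - 3) (by omega)
    have e : i + 1 + ((n - 3 : ℕ) : ZMod n) = i - 2 := by
      rw [Nat.cast_sub (by omega)]; simp; ring
    rwa [e] at h
  have hO : 0 ≤ hdet (V (i - 1)) (V i) (V (i + 1)) * hdet (V (i - 1)) (V i) (O i) := by
    obtain ⟨w, hw, hz⟩ := hcoh i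
    refine cone_side (A := V (i + 1)) (B := V i) (C := V (i - 1)) _ _ (hdet_right _ _)
      (hdet_left _ _) ?_ ⟨w, gseg_comm hw, hz⟩
    intro h
    exact hgen3 i (i + 1) (i - 1) (fun h => n1 (by linear_combination -h)) hBCi.symm
      (fun h => n2 (by linear_combination h)) (Or.inl h)
  have e2 : i - 1 - 1 = i - 2 := by ring
  have hOA : 0 ≤ hdet (V (i - 1)) (V i) (V (i - 2)) * hdet (V (i - 1)) (V i) (O (i - 1)) := by
    have h := hcoh (i - 1)
    rw [sub_add_cancel, e2] at h
    refine cone_side (A := V (i - 2)) (B := V (i - 1)) (C := V i) _ _ (hdet_left _ _)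
      (hdet_right _ _) ?_ h
    intro h
    exact hgen3 (i - 1) (i - 2) i (fun h => n1 (by linear_combination h)) hBCi
      (fun h => n2 (by linear_combination -h)) (Or.inl h)
  have hO' : 0 ≤ hdet (V (i - 1)) (V i) (V (i + 1)) * hdet (V (i - 1)) (V i) (O (i - 1)) := by
    have h4 : hdet (V (i - 1)) (V i) (V (i - 2)) ≠ 0 :=
      hne0 _ (fun h => n1 (by linear_combination -h)) (fun h => n2 (by linear_combination -h))
    have h5 : 0 < hdet (V (i - 1)) (V i) (V (i - 2)) ^ 2 := by positivity
    have h6 := mul_nonneg hside.le hOA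
    refine nonneg_of_mul_nonneg_right (a := hdet (V (i - 1)) (V i) (V (i - 2)) ^ 2) ?_ h5
    linarith
  obtain ⟨a1, a2, a3⟩ := hcirc i
  obtain ⟨b1, b2, b3⟩ := hcirc (i - 1)
  rw [sub_add_cancel] at b3
  obtain ⟨c1, c2, c3⟩ := core hBC (O := O i) (O' := O (i - 1)) (D := V (i + 1))
    (by unfold ch; rw [a1, a2]) (by unfold ch; rw [a3, a2]) (by unfold ch; rw [b2, b3]) hD hO hO'
  rw [ch_lt, ch_lt, a2, b3] at c1
  rw [ch_lt, ch_lt, a2, b3] at c2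
  have c3' : R i = R (i - 1) → dist (O (i - 1)) (V (i + 1)) = R (i - 1) := by
    intro h
    have := c3 (by unfold ch; rw [a2, b3, h])
    unfold ch at this
    rw [hcosh_inj dist_nonneg dist_nonneg] at this
    rw [this, b3]
  rcases lt_trichotomy (R i) (R (i - 1)) with h | h | h
  · have := c1 h
    exact ⟨⟨fun _ => h, fun _ => this⟩, ⟨fun h' => by linarith, fun h' => by linarith⟩⟩
  · have := c3' h
    exact ⟨⟨fun _ => by linarith, fun _ => by linarith⟩,
      ⟨fun h' => by linarith, fun h' => by linarith⟩⟩
  · have := c2 h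
    exact ⟨⟨fun h' => by linarith, fun h' => by linarith⟩, ⟨fun _ => h, fun _ => this⟩⟩
end
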